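/- arXiv:1605.08635 — 3 statements merged into one kernel-verified Lean document; each statement's English description precedes it below -/
import Mathlib

section
/- Let (Ω_i, 𝒜_i, μ_i), i = 1,…,n, be probability spaces and let μ = ⊗_{i=1}^n μ_i be the product measure on Ω = Ω_1 × … × Ω_n. Let f : Ω → ℝ be a bounded measurable function satisfying |𝔡f(x)| ≤ 1 for all x ∈ Ω. Then for every t ≥ 0, μ(|f − ∫f dμ| ≥ t) ≤ 2 e^{−t²/4}. -/
/-!
The proof is the entropy method. Write `Ent(e^g) = ∫ g e^g - (∫ e^g) log ∫ e^g`.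

* On one probability space, Jensen's inequality bounds `Ent(e^g)` by the covariance of `g` and
  `e^g`, that is by half of `∬ (g(x) - g(z)) (e^{g(x)} - e^{g(z)})`. The elementary inequality
  `(a - b)(e^a - e^b) ≤ (a - b)² (e^a + e^b) / 2` then gives
  `Ent(e^g) ≤ (1/2) ∫ e^{g(x)} ∫ (g(x) - g(z))² dz dx` (`entExp_le`).
* Entropy is subadditive on products (`entExp_prod_le`), a consequence of its variational
  characterization. Induction on the number of factors turns the one-space bound into
  `Ent(e^g) ≤ ∫ e^g |𝔡g|²` on the product (`entExp_pi_le`).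
* For `g = s f` with `|𝔡f| ≤ 1` this reads `Ent(e^{s f}) ≤ s² ∫ e^{s f}`, and the Herbst argument
  integrates it to `log ∫ e^{s (f - ∫ f)} ≤ s²` (`cgf_le_of_entExp_le`).

Chernoff's bound at `s = t / 2`, applied to `f` and to `-f`, yields the two tails.
-/

open MeasureTheory

variable {n : ℕ} {Ω : Fin n → Type*} [∀ i, MeasurableSpace (Ω i)]

/-- The coordinatewise L²-difference operator
`𝔡ᵢ f(x) = ((1/2) ∫ (f(x) − f(x₁,…,yᵢ,…,xₙ))² μᵢ(dyᵢ))^{1/2}`. -/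
noncomputable def dd (μ : ∀ i, Measure (Ω i)) (f : (∀ i, Ω i) → ℝ) (i : Fin n)
    (x : ∀ i, Ω i) : ℝ :=
  Real.sqrt ((1 / 2) * ∫ y, (f x - f (Function.update x i y)) ^ 2 ∂(μ i))

/-- The Euclidean norm `|𝔡f(x)|` of the vector `(𝔡₁f(x),…,𝔡ₙf(x))`. -/
noncomputable def ddNorm (μ : ∀ i, Measure (Ω i)) (f : (∀ i, Ω i) → ℝ)
    (x : ∀ i, Ω i) : ℝ :=
  Real.sqrt (∑ i, dd μ f i x ^ 2)

open ProbabilityTheory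

/-! ### Bounded measurable functions -/

/-- Bounded measurable real functions. -/
def BM {X : Type*} [MeasurableSpace X] (h : X → ℝ) : Prop :=
  Measurable h ∧ ∃ C, ∀ x, |h x| ≤ C

namespace BM

variable {X Y : Type*} [MeasurableSpace X] [MeasurableSpace Y]

lemma integrable {h : X → ℝ} (hh : BM h) (ν : Measure X) [IsProbabilityMeasure ν] :
    Integrable h ν := by
  obtain ⟨hm, C, hC⟩ := hh
  exact Integrable.of_bound hm.aestronglyMeasurable C (Filter.Eventually.of_forall hC)

lemma const (c : ℝ) : BM (fun _ : X => c) := ⟨measurable_const, |c|, fun _ => le_rfl⟩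

lemma add {h k : X → ℝ} (hh : BM h) (hk : BM k) : BM (fun x => h x + k x) := by
  obtain ⟨hm, C, hC⟩ := hh
  obtain ⟨km, D, hD⟩ := hk
  exact ⟨hm.add km, C + D, fun x => (abs_add_le _ _).trans (add_le_add (hC x) (hD x))⟩

lemma neg {h : X → ℝ} (hh : BM h) : BM (fun x => - h x) := by
  obtain ⟨hm, C, hC⟩ := hh
  exact ⟨hm.neg, C, fun x => by simpa using hC x⟩

lemma sub {h k : X → ℝ} (hh : BM h) (hk : BM k) : BM (fun x => h x - k x) := by
  simpa only [sub_eq_add_neg] using hh.add hk.neg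

lemma mul {h k : X → ℝ} (hh : BM h) (hk : BM k) : BM (fun x => h x * k x) := by
  obtain ⟨hm, C, hC⟩ := hh
  obtain ⟨km, D, hD⟩ := hk
  refine ⟨hm.mul km, C * D, fun x => ?_⟩
  rw [abs_mul]
  exact mul_le_mul (hC x) (hD x) (abs_nonneg _) ((abs_nonneg _).trans (hC x))

lemma sq {h : X → ℝ} (hh : BM h) : BM (fun x => h x ^ 2) := by
  simpa only [pow_two] using hh.mul hh

lemma exp {h : X → ℝ} (hh : BM h) : BM (fun x => Real.exp (h x)) := by
  obtain ⟨hm, C, hC⟩ := hh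
  refine ⟨hm.exp, Real.exp C, fun x => ?_⟩
  rw [Real.abs_exp]
  exact Real.exp_le_exp.2 ((le_abs_self _).trans (hC x))

lemma comp {h : X → ℝ} (hh : BM h) {φ : Y → X} (hφ : Measurable φ) : BM (fun y => h (φ y)) :=
  ⟨hh.1.comp hφ, hh.2.imp fun _ hC _ => hC _⟩

lemma integral {h : X → Y → ℝ} (hh : BM (fun p : X × Y => h p.1 p.2))
    (ν : Measure Y) [IsProbabilityMeasure ν] : BM (fun x => ∫ y, h x y ∂ν) := by
  obtain ⟨hm, C, hC⟩ := hh
  refine ⟨(hm.stronglyMeasurable.integral_prod_right' (ν := ν)).measurable, C, fun x => ?_⟩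
  have := norm_integral_le_of_norm_le_const (μ := ν) (f := fun y => h x y) (C := C)
    (Filter.Eventually.of_forall fun y => hC (x, y))
  simpa using this

lemma left {h : X → Y → ℝ} (hh : BM (fun p : X × Y => h p.1 p.2)) (x : X) : BM (h x) :=
  hh.comp (φ := fun y => (x, y)) (by fun_prop)

lemma right {h : X → Y → ℝ} (hh : BM (fun p : X × Y => h p.1 p.2)) (y : Y) :
    BM (fun x => h x y) :=
  hh.comp (φ := fun x => (x, y)) (by fun_prop)

lemma swap {h : X → Y → ℝ} (hh : BM (fun p : X × Y => h p.1 p.2)) :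
    BM (fun p : Y × X => h p.2 p.1) :=
  hh.comp measurable_swap

lemma integral_exp_pos {h : X → ℝ} (hh : BM h) (ν : Measure X) [IsProbabilityMeasure ν] :
    0 < ∫ x, Real.exp (h x) ∂ν :=
  MeasureTheory.integral_exp_pos (hh.exp.integrable ν)

/-- The integral of `exp h` lies in `[exp (-C), exp C]`, so its logarithm is bounded. -/
lemma log_integral_exp {h : X → Y → ℝ} (hh : BM (fun p : X × Y => h p.1 p.2))
    (ν : Measure Y) [IsProbabilityMeasure ν] :
    BM (fun x => Real.log (∫ y, Real.exp (h x y) ∂ν)) := by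
  refine ⟨(BM.integral (h := fun x y => Real.exp (h x y)) hh.exp ν).1.log, ?_⟩
  obtain ⟨C, hC⟩ := hh.2
  refine ⟨C, fun x => ?_⟩
  have hx := hh.left x
  have hpos := hx.integral_exp_pos ν
  have hi := hx.exp.integrable ν
  rw [abs_le]
  constructor
  · rw [Real.le_log_iff_exp_le hpos]
    calc Real.exp (-C) = ∫ _, Real.exp (-C) ∂ν := by simp
      _ ≤ _ := integral_mono (integrable_const _) hi fun y =>
        Real.exp_le_exp.2 (abs_le.1 (hC (x, y))).1
  · rw [Real.log_le_iff_le_exp hpos]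
    calc _ ≤ ∫ _, Real.exp C ∂ν := integral_mono hi (integrable_const _) fun y =>
        Real.exp_le_exp.2 (abs_le.1 (hC (x, y))).2
      _ = Real.exp C := by simp

end BM

/-! ### Entropy and the modified log-Sobolev inequality -/

/-- The entropy of `exp g`, i.e. `∫ e^g g dν - (∫ e^g dν) log (∫ e^g dν)`. -/
noncomputable def entExp {X : Type*} [MeasurableSpace X] (ν : Measure X) (g : X → ℝ) : ℝ :=
  ∫ x, Real.exp (g x) * g x ∂ν - (∫ x, Real.exp (g x) ∂ν) * Real.log (∫ x, Real.exp (g x) ∂ν)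

section Entropy

variable {X Y : Type*} [MeasurableSpace X] [MeasurableSpace Y]

lemma BM.entExp {h : X → Y → ℝ} (hh : BM (fun p : X × Y => h p.1 p.2))
    (ν : Measure Y) [IsProbabilityMeasure ν] : BM (fun x => entExp ν (h x)) :=
  (BM.integral (h := fun x y => Real.exp (h x y) * h x y) (hh.exp.mul hh) ν).sub
    ((BM.integral (h := fun x y => Real.exp (h x y)) hh.exp ν).mul (hh.log_integral_exp ν))

/-- The variational (Donsker–Varadhan) lower bound for entropy. -/
lemma entExp_variational (ν : Measure X) [IsProbabilityMeasure ν] {g k : X → ℝ}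
    (hg : BM g) (hk : BM k) :
    ∫ x, Real.exp (g x) * k x ∂ν ≤
      entExp ν g + (∫ x, Real.exp (g x) ∂ν) * Real.log (∫ x, Real.exp (k x) ∂ν) := by
  have hm := hg.integral_exp_pos ν
  have hM := hk.integral_exp_pos ν
  unfold entExp
  set m := ∫ x, Real.exp (g x) ∂ν with hmdef
  set M := ∫ x, Real.exp (k x) ∂ν with hMdef
  -- `1 + u ≤ e^u` at `u = k - log M - g + log m`, multiplied by `e^g`.
  have key : ∀ x, Real.exp (g x) * k x - Real.exp (g x) * g x
      + Real.exp (g x) * (1 - Real.log M + Real.log m) ≤ Real.exp (k x) * (m / M) := by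
    intro x
    have h1 := Real.add_one_le_exp (k x - Real.log M - g x + Real.log m)
    have h2 := mul_le_mul_of_nonneg_left h1 (Real.exp_pos (g x)).le
    rw [← Real.exp_add] at h2
    have h3 : Real.exp (g x + (k x - Real.log M - g x + Real.log m))
        = Real.exp (k x) * (m / M) := by
      rw [show g x + (k x - Real.log M - g x + Real.log m) = k x + Real.log m - Real.log M by ring,
        Real.exp_sub, Real.exp_add, Real.exp_log hm, Real.exp_log hM, mul_div_assoc]
    rw [h3] at h2
    linarith
  have i1 := (hg.exp.mul hk).integrable ν
  have i2 := (hg.exp.mul hg).integrable ν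
  have i3 := (hg.exp.mul (BM.const (1 - Real.log M + Real.log m))).integrable ν
  have h := integral_mono ((i1.sub i2).add i3)
    ((hk.exp.mul (BM.const (m / M))).integrable ν) key
  rw [integral_add' (i1.sub i2) i3, integral_sub' i1 i2, integral_mul_const, integral_mul_const,
    ← hmdef, ← hMdef, mul_div_cancel₀ _ hM.ne'] at h
  linarith

/-- Subadditivity of entropy on a product of two spaces. -/
lemma entExp_prod_le (ν : Measure X) [IsProbabilityMeasure ν] (ρ : Measure Y)
    [IsProbabilityMeasure ρ] {g : X → Y → ℝ} (hg : BM (fun p : X × Y => g p.1 p.2)) :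
    entExp (ν.prod ρ) (fun p => g p.1 p.2) ≤
      ∫ y, entExp ν (fun x => g x y) ∂ρ + ∫ x, entExp ρ (g x) ∂ν := by
  have hs : BM (fun p : Y × X => g p.2 p.1) := hg.swap
  have hL := BM.log_integral_exp (h := fun y x => g x y) hs ν
  set L : Y → ℝ := fun y => Real.log (∫ x, Real.exp (g x y) ∂ν) with hLdef
  have hexpL : ∀ y, Real.exp (L y) = ∫ x, Real.exp (g x y) ∂ν := fun y =>
    Real.exp_log ((hg.right y).integral_exp_pos ν)
  set M := ∫ p : X × Y, Real.exp (g p.1 p.2) ∂(ν.prod ρ) with hM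
  have hM1 : M = ∫ y, Real.exp (L y) ∂ρ := by
    simp_rw [hexpL]
    exact integral_prod_symm _ (hg.exp.integrable _)
  have hM2 : M = ∫ x, ∫ y, Real.exp (g x y) ∂ρ ∂ν := integral_prod _ (hg.exp.integrable _)
  -- the entropy in the second variable, tested against `L`
  have hv : ∀ x, ∫ y, Real.exp (g x y) * L y ∂ρ ≤
      entExp ρ (g x) + (∫ y, Real.exp (g x y) ∂ρ) * Real.log M := fun x => by
    rw [hM1]
    exact entExp_variational ρ (hg.left x) hL
  have b1 : BM (fun p : X × Y => Real.exp (g p.1 p.2) * L p.2) :=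
    hg.exp.mul (hL.comp measurable_snd)
  have b2 := hg.entExp ρ
  have b3 := BM.integral (h := fun x y => Real.exp (g x y)) hg.exp ρ
  have h1 := integral_mono
    ((BM.integral (h := fun x y => Real.exp (g x y) * L y) b1 ρ).integrable ν)
    ((b2.add (b3.mul (BM.const (Real.log M)))).integrable ν) hv
  rw [integral_add (b2.integrable ν) ((b3.mul (BM.const _)).integrable ν), integral_mul_const,
    ← hM2] at h1
  have h2 : ∫ x, ∫ y, Real.exp (g x y) * L y ∂ρ ∂ν
      = ∫ y, (∫ x, Real.exp (g x y) ∂ν) * L y ∂ρ := by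
    rw [integral_integral_swap (b1.integrable _)]
    simp_rw [integral_mul_const]
  have c1 : BM (fun y => ∫ x, Real.exp (g x y) * g x y ∂ν) :=
    BM.integral (h := fun y x => Real.exp (g x y) * g x y) (hs.exp.mul hs) ν
  have c2 : BM (fun y => (∫ x, Real.exp (g x y) ∂ν) * L y) :=
    (BM.integral (h := fun y x => Real.exp (g x y)) hs.exp ν).mul hL
  have h3 : ∫ y, entExp ν (fun x => g x y) ∂ρ
      = ∫ p : X × Y, Real.exp (g p.1 p.2) * g p.1 p.2 ∂(ν.prod ρ)
        - ∫ y, (∫ x, Real.exp (g x y) ∂ν) * L y ∂ρ := by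
    rw [integral_prod_symm _ ((hg.exp.mul hg).integrable _),
      ← integral_sub (c1.integrable _) (c2.integrable _)]
    rfl
  have h4 : entExp (ν.prod ρ) (fun p => g p.1 p.2)
      = ∫ p : X × Y, Real.exp (g p.1 p.2) * g p.1 p.2 ∂(ν.prod ρ) - M * Real.log M := rfl
  rw [h3, h4]
  linarith

/-- The inequality `tanh (u / 2) ≤ u / 2`, cleared of denominators. -/
lemma two_mul_exp_sub_one_le {u : ℝ} (hu : 0 ≤ u) :
    2 * (Real.exp u - 1) ≤ u * (Real.exp u + 1) := by
  have hd : ∀ x : ℝ, HasDerivAt (fun u => u * (Real.exp u + 1) - 2 * (Real.exp u - 1))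
      (1 * (Real.exp x + 1) + x * Real.exp x - 2 * Real.exp x) x := fun x =>
    ((hasDerivAt_id x).mul ((Real.hasDerivAt_exp x).add_const 1)).sub
      (((Real.hasDerivAt_exp x).sub_const 1).const_mul 2)
  have hmono : Monotone (fun u : ℝ => u * (Real.exp u + 1) - 2 * (Real.exp u - 1)) := by
    refine monotone_of_deriv_nonneg (fun x => (hd x).differentiableAt) fun x => ?_
    rw [(hd x).deriv]
    have h1 := Real.add_one_le_exp (-x)
    have h2 := mul_le_mul_of_nonneg_left h1 (Real.exp_pos x).le
    rw [← Real.exp_add, add_neg_cancel, Real.exp_zero] at h2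
    linarith
  have := hmono hu
  simp only [Real.exp_zero] at this
  linarith

lemma mul_exp_sub_exp_le (a b : ℝ) :
    (a - b) * (Real.exp a - Real.exp b) ≤
      1 / 2 * (a - b) ^ 2 * (Real.exp a + Real.exp b) := by
  wlog h : b ≤ a generalizing a b
  · have := this b a (le_of_not_ge h)
    linarith
  have h1 := two_mul_exp_sub_one_le (sub_nonneg.2 h)
  have h2 := mul_le_mul_of_nonneg_left h1 (Real.exp_pos b).le
  have h3 : Real.exp a = Real.exp b * Real.exp (a - b) := by rw [← Real.exp_add]; congr 1; ring
  have h4 : 2 * (Real.exp a - Real.exp b) ≤ (a - b) * (Real.exp a + Real.exp b) := by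
    rw [h3]; linarith
  nlinarith [mul_le_mul_of_nonneg_left h4 (sub_nonneg.2 h)]

/-- The modified log-Sobolev inequality on a single probability space: entropy is at most the
covariance of `g` and `e^g`, which is symmetrized and bounded by `mul_exp_sub_exp_le`. -/
lemma entExp_le (ν : Measure X) [IsProbabilityMeasure ν] {g : X → ℝ} (hg : BM g) :
    entExp ν g ≤ 1 / 2 * ∫ x, Real.exp (g x) * ∫ z, (g x - g z) ^ 2 ∂ν ∂ν := by
  have hm := hg.integral_exp_pos ν
  set m := ∫ x, Real.exp (g x) ∂ν with hmdef
  set A := ∫ x, g x ∂ν with hA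
  have hJ : A ≤ Real.log m := by
    rw [Real.le_log_iff_exp_le hm]
    have : ∀ x, Real.exp A * (g x - A + 1) ≤ Real.exp (g x) := fun x => by
      calc _ ≤ Real.exp A * Real.exp (g x - A) :=
            mul_le_mul_of_nonneg_left (Real.add_one_le_exp _) (Real.exp_pos _).le
        _ = _ := by rw [← Real.exp_add]; congr 1; ring
    have h := integral_mono (((BM.const (Real.exp A)).mul
      ((hg.sub (BM.const A)).add (BM.const 1))).integrable ν) (hg.exp.integrable ν) this
    rw [integral_const_mul, integral_add ((hg.sub (BM.const A)).integrable ν)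
      (integrable_const _), integral_sub (hg.integrable ν) (integrable_const _)] at h
    simpa [← hA] using h
  have g1 : BM (fun p : X × X => g p.1) := hg.comp measurable_fst
  have g2 : BM (fun p : X × X => g p.2) := hg.comp measurable_snd
  let H : X → X → ℝ := fun x z =>
    1 / 2 * (Real.exp (g x) * (g x - g z) ^ 2) - Real.exp (g x) * (g x - g z)
  have bH1 : BM (fun p : X × X => 1 / 2 * (Real.exp (g p.1) * (g p.1 - g p.2) ^ 2)) :=
    (BM.const _).mul (g1.exp.mul (g1.sub g2).sq)
  have bH2 : BM (fun p : X × X => Real.exp (g p.1) * (g p.1 - g p.2)) :=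
    g1.exp.mul (g1.sub g2)
  have bH : BM (fun p : X × X => H p.1 p.2) := bH1.sub bH2
  have hsymm : 0 ≤ ∫ p : X × X, (H p.1 p.2 + H p.2 p.1) ∂(ν.prod ν) := by
    refine integral_nonneg fun p => ?_
    have := mul_exp_sub_exp_le (g p.1) (g p.2)
    simp only [H, Pi.zero_apply]
    nlinarith [this]
  have hswap : ∫ p : X × X, H p.2 p.1 ∂(ν.prod ν) = ∫ p : X × X, H p.1 p.2 ∂(ν.prod ν) :=
    integral_prod_swap (μ := ν) (ν := ν) (fun p : X × X => H p.1 p.2)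
  rw [integral_add (bH.integrable _) (bH.swap.integrable _), hswap] at hsymm
  have hcomp : ∫ p : X × X, H p.1 p.2 ∂(ν.prod ν)
      = 1 / 2 * ∫ x, Real.exp (g x) * ∫ z, (g x - g z) ^ 2 ∂ν ∂ν
        - (∫ x, Real.exp (g x) * g x ∂ν - m * A) := by
    have e1 : ∫ p : X × X, H p.1 p.2 ∂(ν.prod ν) = _ :=
      integral_sub (bH1.integrable (ν.prod ν)) (bH2.integrable (ν.prod ν))
    rw [e1, integral_prod _ (bH1.integrable _), integral_prod _ (bH2.integrable _)]
    simp_rw [integral_const_mul]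
    congr 1
    have : ∀ x, ∫ z, (g x - g z) ∂ν = g x - A := fun x => by
      rw [integral_sub (integrable_const _) (hg.integrable ν)]; simp [hA]
    simp_rw [this, mul_sub]
    rw [integral_sub ((hg.exp.mul hg).integrable ν)
      ((hg.exp.mul (BM.const A)).integrable ν), integral_mul_const]
  unfold entExp
  rw [← hmdef]
  have := mul_le_mul_of_nonneg_left hJ hm.le
  linarith

end Entropy

/-- The modified log-Sobolev inequality on a finite product space, by induction on the number of
factors. -/
lemma entExp_pi_le : ∀ {n : ℕ} {Ω : Fin n → Type*} [∀ i, MeasurableSpace (Ω i)]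
    (μ : ∀ i, Measure (Ω i)) [∀ i, IsProbabilityMeasure (μ i)] {g : (∀ i, Ω i) → ℝ}, BM g →
    entExp (Measure.pi μ) g ≤ ∑ i, 1 / 2 * ∫ x, Real.exp (g x) *
      ∫ z, (g x - g (Function.update x i z)) ^ 2 ∂(μ i) ∂(Measure.pi μ) := by
  intro n
  induction n with
  | zero =>
    intro Ω _ μ _ g hg
    have hc : g = fun _ => g default := funext fun x => by rw [Subsingleton.elim x default]
    rw [hc]
    simp [entExp]
  | succ n ih =>
    intro Ω _ μ _ g hg
    let e := MeasurableEquiv.piFinSuccAbove Ω 0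
    let ρ : Measure (∀ j : Fin n, Ω j.succ) := Measure.pi fun j => μ j.succ
    have hmp : MeasurePreserving e.symm ((μ 0).prod ρ) (Measure.pi μ) :=
      (measurePreserving_piFinSuccAbove μ 0).symm
    let G : Ω 0 → (∀ j : Fin n, Ω j.succ) → ℝ := fun a w => g (Fin.cons a w)
    have hsymm : ∀ p : Ω 0 × (∀ j : Fin n, Ω j.succ), e.symm p = Fin.cons p.1 p.2 := fun p => by
      simp only [e, MeasurableEquiv.piFinSuccAbove_symm_apply, Fin.insertNthEquiv]
      exact Fin.insertNth_zero _ _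
    have hint : ∀ h : (∀ i, Ω i) → ℝ, ∫ x, h x ∂(Measure.pi μ)
        = ∫ p, h (Fin.cons p.1 p.2) ∂((μ 0).prod ρ) := fun h =>
      (hmp.integral_comp' h).symm.trans
        (integral_congr_ae (Filter.Eventually.of_forall fun p => congrArg h (hsymm p)))
    have hcons : Measurable (fun p : Ω 0 × (∀ j : Fin n, Ω j.succ) =>
        (Fin.cons p.1 p.2 : ∀ i, Ω i)) := by
      have := e.symm.measurable
      rwa [show (e.symm : _ → _) = _ from funext hsymm] at this
    have bG : BM (fun p : Ω 0 × (∀ j : Fin n, Ω j.succ) => G p.1 p.2) := hg.comp hcons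
    have hent : entExp (Measure.pi μ) g = entExp ((μ 0).prod ρ) (fun p => G p.1 p.2) := by
      unfold entExp
      simp only [hint]
      rfl
    rw [hent, Fin.sum_univ_succ]
    refine (entExp_prod_le (μ 0) ρ bG).trans (add_le_add ?_ ?_)
    -- the coordinate `0`
    · have hW : BM (fun p : Ω 0 × (∀ j : Fin n, Ω j.succ) =>
          Real.exp (G p.1 p.2) * ∫ z, (G p.1 p.2 - G z p.2) ^ 2 ∂(μ 0)) := by
        refine bG.exp.mul (BM.integral
          (h := fun (p : Ω 0 × (∀ j : Fin n, Ω j.succ)) z => (G p.1 p.2 - G z p.2) ^ 2) ?_ _)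
        exact ((bG.comp measurable_fst).sub (bG.comp
          (φ := fun q : (Ω 0 × (∀ j : Fin n, Ω j.succ)) × Ω 0 => (q.2, q.1.2))
          (by fun_prop))).sq
      have h1 := integral_mono
        ((BM.entExp (h := fun w a => G a w) bG.swap (μ 0)).integrable ρ)
        (((BM.const (1 / 2)).mul (BM.integral (h := fun w a => Real.exp (G a w) *
          ∫ z, (G a w - G z w) ^ 2 ∂(μ 0)) (hW.comp measurable_swap) (μ 0))).integrable ρ)
        (fun w => entExp_le (μ 0) (bG.right w))
      refine h1.trans_eq ?_
      rw [integral_const_mul, hint]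
      simp only [Fin.update_cons_zero]
      rw [← integral_prod_symm (μ := μ 0) (ν := ρ) (fun p => Real.exp (G p.1 p.2) *
        ∫ z, (G p.1 p.2 - G z p.2) ^ 2 ∂(μ 0)) (hW.integrable _)]
    -- the other coordinates, by the induction hypothesis
    · have hW : ∀ j : Fin n, BM (fun p : Ω 0 × (∀ j : Fin n, Ω j.succ) =>
          Real.exp (G p.1 p.2) *
            ∫ z, (G p.1 p.2 - G p.1 (Function.update p.2 j z)) ^ 2 ∂(μ j.succ)) := by
        intro j
        refine bG.exp.mul (BM.integral
          (h := fun (p : Ω 0 × (∀ j : Fin n, Ω j.succ)) z =>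
            (G p.1 p.2 - G p.1 (Function.update p.2 j z)) ^ 2) ?_ _)
        refine ((bG.comp measurable_fst).sub (bG.comp
          (φ := fun q : (Ω 0 × (∀ j : Fin n, Ω j.succ)) × Ω j.succ =>
            (q.1.1, Function.update q.1.2 j q.2)) ?_)).sq
        refine (measurable_fst.comp measurable_fst).prodMk ?_
        exact measurable_update'.comp
          ((measurable_snd.comp measurable_fst).prodMk measurable_snd)
      have hI := fun j => (BM.const (1 / 2)).mul (BM.integral (h := fun a w => Real.exp (G a w) *
          ∫ z, (G a w - G a (Function.update w j z)) ^ 2 ∂(μ j.succ)) (hW j) ρ)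
      have h1 := integral_mono ((bG.entExp ρ).integrable (μ 0))
        (integrable_finsetSum Finset.univ fun j _ => (hI j).integrable (μ 0))
        (fun a => ih (fun j => μ j.succ) (bG.left a))
      refine h1.trans_eq ?_
      rw [integral_finsetSum _ fun j _ => (hI j).integrable (μ 0)]
      refine Finset.sum_congr rfl fun j _ => ?_
      rw [integral_const_mul, hint]
      simp only [← Fin.cons_update]
      rw [integral_prod _ ((hW j).integrable _)]

/-! ### The Herbst argument and the tail bound -/

/-- The Herbst argument: `s ↦ cgf s / s - s` is antitone on `(0, ∞)`, with limit `∫ f` at `0`. -/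
lemma cgf_le_of_entExp_le {X : Type*} [MeasurableSpace X] (ν : Measure X)
    [IsProbabilityMeasure ν] {f : X → ℝ} (hf : BM f)
    (h : ∀ s : ℝ, 0 < s → entExp ν (fun x => s * f x) ≤ s ^ 2 * ∫ x, Real.exp (s * f x) ∂ν)
    {s : ℝ} (hs : 0 < s) : cgf f ν s ≤ s * (∫ x, f x ∂ν) + s ^ 2 := by
  have hset : integrableExpSet f ν = Set.univ :=
    Set.eq_univ_of_forall fun t => ((BM.const t).mul hf).exp.integrable ν
  have hmem : ∀ t, t ∈ interior (integrableExpSet f ν) := fun t => by simp [hset]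
  have hdiff : ∀ t, HasDerivAt (cgf f ν) (deriv (cgf f ν) t) t := fun t =>
    (analyticAt_cgf (hmem t)).differentiableAt.hasDerivAt
  have hmgf : ∀ t, 0 < mgf f ν t := fun t => ((BM.const t).mul hf).integral_exp_pos ν
  have hK : ∀ t, 0 < t → HasDerivAt (fun t => cgf f ν t / t - t)
      ((deriv (cgf f ν) t * t - cgf f ν t * 1) / t ^ 2 - 1) t := fun t ht =>
    ((hdiff t).div (hasDerivAt_id t) ht.ne').sub (hasDerivAt_id t)
  have hanti : AntitoneOn (fun t => cgf f ν t / t - t) (Set.Ioi 0) := by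
    refine antitoneOn_of_deriv_nonpos (convex_Ioi 0)
      (fun t ht => (hK t ht).continuousAt.continuousWithinAt)
      (fun t ht => (hK t (interior_subset ht)).differentiableAt.differentiableWithinAt)
      fun t ht => ?_
    have ht : 0 < t := interior_subset ht
    rw [(hK t ht).deriv, sub_nonpos, div_le_one (by positivity)]
    have hE := h t ht
    have h1 : entExp ν (fun x => t * f x)
        = t * ∫ x, f x * Real.exp (t * f x) ∂ν - mgf f ν t * cgf f ν t := by
      unfold entExp
      rw [← integral_const_mul]
      congr 1
      exact integral_congr_ae (Filter.Eventually.of_forall fun x => by ring)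
    rw [h1] at hE
    change _ ≤ t ^ 2 * mgf f ν t at hE
    rw [deriv_cgf (hmem t)]
    have hp := hmgf t
    refine le_of_mul_le_mul_right ?_ hp
    have : (∫ x, f x * Real.exp (t * f x) ∂ν) / mgf f ν t * mgf f ν t
      = ∫ x, f x * Real.exp (t * f x) ∂ν := div_mul_cancel₀ _ hp.ne'
    calc _ = ((∫ x, f x * Real.exp (t * f x) ∂ν) / mgf f ν t * mgf f ν t) * t
          - mgf f ν t * cgf f ν t := by ring
      _ ≤ _ := by rw [this]; linarith
  have hlim : Filter.Tendsto (fun t => cgf f ν t / t - t) (nhdsWithin 0 (Set.Ioi 0))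
      (nhds (∫ x, f x ∂ν)) := by
    have h0 := (hdiff 0).tendsto_slope_zero_right
    rw [deriv_cgf_zero (hmem 0)] at h0
    have h1 : Filter.Tendsto (fun t : ℝ => t) (nhdsWithin 0 (Set.Ioi 0)) (nhds 0) :=
      Filter.tendsto_id.mono_left nhdsWithin_le_nhds
    have h2 := h0.sub h1
    simp only [zero_add, cgf_zero, sub_zero, smul_eq_mul, probReal_univ, div_one] at h2
    refine h2.congr fun t => ?_
    rw [div_eq_inv_mul]
  have hfin : cgf f ν s / s - s ≤ ∫ x, f x ∂ν := by
    refine ge_of_tendsto hlim ?_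
    filter_upwards [Ioo_mem_nhdsGT hs] with t ht
    exact hanti ht.1 hs ht.2.le
  have h2 : cgf f ν s / s ≤ ∫ x, f x ∂ν + s := by linarith
  rw [div_le_iff₀ hs] at h2
  linarith

/-- The bound `|𝔡f| ≤ 1` turns the modified log-Sobolev inequality for `s f` into the
hypothesis of the Herbst argument. -/
lemma entExp_mul_le (μ : ∀ i, Measure (Ω i)) [∀ i, IsProbabilityMeasure (μ i)]
    {f : (∀ i, Ω i) → ℝ} (hf : BM f) (hgrad : ∀ x, ddNorm μ f x ≤ 1) (s : ℝ) :
    entExp (Measure.pi μ) (fun x => s * f x) ≤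
      s ^ 2 * ∫ x, Real.exp (s * f x) ∂(Measure.pi μ) := by
  have hsf : BM (fun x => s * f x) := (BM.const s).mul hf
  refine (entExp_pi_le μ hsf).trans ?_
  have hW : ∀ i, BM (fun x => Real.exp (s * f x) *
      ∫ z, (s * f x - s * f (Function.update x i z)) ^ 2 ∂(μ i)) := fun i => by
    refine hsf.exp.mul (BM.integral (h := fun (x : ∀ i, Ω i) z =>
      (s * f x - s * f (Function.update x i z)) ^ 2) ?_ _)
    exact ((hsf.comp measurable_fst).sub (hsf.comp
      (φ := fun q : (∀ i, Ω i) × Ω i => Function.update q.1 i q.2) measurable_update')).sq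
  refine (Finset.sum_congr rfl fun i _ => (integral_const_mul _ _).symm).trans_le ?_
  rw [← integral_const_mul (s ^ 2),
    ← integral_finsetSum _ fun i _ => ((BM.const (1 / 2)).mul (hW i)).integrable _]
  refine integral_mono (integrable_finsetSum _ fun i _ =>
    ((BM.const (1 / 2)).mul (hW i)).integrable _)
    (((BM.const _).mul hsf.exp).integrable _) fun x => ?_
  have hsum : ∑ i, dd μ f i x ^ 2 ≤ 1 := by
    have := hgrad x
    rwa [ddNorm, Real.sqrt_le_one] at this
  have hdd : ∀ i, dd μ f i x ^ 2
      = 1 / 2 * ∫ y, (f x - f (Function.update x i y)) ^ 2 ∂(μ i) := fun i => by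
    rw [dd, Real.sq_sqrt]
    exact mul_nonneg (by norm_num) (integral_nonneg fun y => sq_nonneg _)
  calc _ = s ^ 2 * Real.exp (s * f x) * ∑ i, dd μ f i x ^ 2 := by
        rw [Finset.mul_sum]
        refine Finset.sum_congr rfl fun i _ => ?_
        rw [hdd]
        simp_rw [← mul_sub, mul_pow]
        rw [integral_const_mul]
        ring
    _ ≤ s ^ 2 * Real.exp (s * f x) * 1 := mul_le_mul_of_nonneg_left hsum (by positivity)
    _ = _ := mul_one _

/-- Chernoff's bound for the upper tail, with the optimal parameter `s = t / 2`. -/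
lemma upper_tail (μ : ∀ i, Measure (Ω i)) [∀ i, IsProbabilityMeasure (μ i)]
    {f : (∀ i, Ω i) → ℝ} (hf : BM f) (hgrad : ∀ x, ddNorm μ f x ≤ 1) {t : ℝ} (ht : 0 < t) :
    (Measure.pi μ).real {x | t ≤ f x - ∫ y, f y ∂(Measure.pi μ)} ≤ Real.exp (-t ^ 2 / 4) := by
  set m := ∫ y, f y ∂(Measure.pi μ) with hm
  have h1 := measure_ge_le_exp_cgf (μ := Measure.pi μ) (X := f) (t := t / 2) (m + t)
    (by positivity) (((BM.const (t / 2)).mul hf).exp.integrable _)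
  have h2 := cgf_le_of_entExp_le (Measure.pi μ) hf
    (fun s _ => entExp_mul_le μ hf hgrad s) (s := t / 2) (by positivity)
  rw [← hm] at h2
  have hset : {x | t ≤ f x - m} = {x | m + t ≤ f x} := by
    ext x; simp only [Set.mem_ofPred_eq]; constructor <;> intro h <;> linarith
  rw [hset]
  refine h1.trans (Real.exp_le_exp.2 ?_)
  linarith

lemma ddNorm_neg (μ : ∀ i, Measure (Ω i)) (f : (∀ i, Ω i) → ℝ) (x : ∀ i, Ω i) :
    ddNorm μ (fun x => - f x) x = ddNorm μ f x := by
  have : ∀ a b : ℝ, (-a - -b) ^ 2 = (a - b) ^ 2 := fun a b => by ring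
  simp only [ddNorm, dd, this]

/-- First order concentration: if `f` is bounded measurable with `|𝔡f| ≤ 1`, then
`μ(|f − ∫ f dμ| ≥ t) ≤ 2 exp(−t²/4)` for all `t ≥ 0`. -/
theorem first_order_concentration
    (μ : ∀ i, Measure (Ω i)) [∀ i, IsProbabilityMeasure (μ i)]
    (f : (∀ i, Ω i) → ℝ) (hmeas : Measurable f) (hbdd : ∃ C, ∀ x, |f x| ≤ C)
    (hgrad : ∀ x, ddNorm μ f x ≤ 1)
    (t : ℝ) (ht : 0 ≤ t) :
    Measure.pi μ {x | t ≤ |f x - ∫ y, f y ∂(Measure.pi μ)|} ≤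
      ENNReal.ofReal (2 * Real.exp (-t ^ 2 / 4)) := by
  rw [← ofReal_measureReal]
  refine ENNReal.ofReal_le_ofReal ?_
  rcases ht.eq_or_lt with rfl | ht
  · refine measureReal_le_one.trans ?_
    norm_num
  have hf : BM f := ⟨hmeas, hbdd⟩
  have h1 := upper_tail μ hf hgrad ht
  have h2 := upper_tail μ hf.neg (fun x => (ddNorm_neg μ f x).trans_le (hgrad x)) ht
  rw [integral_neg] at h2
  have hsub : {x | t ≤ |f x - ∫ y, f y ∂(Measure.pi μ)|} ⊆
      {x | t ≤ f x - ∫ y, f y ∂(Measure.pi μ)} ∪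
        {x | t ≤ - f x - - ∫ y, f y ∂(Measure.pi μ)} := fun x hx => by
    simp only [Set.mem_ofPred_eq, Set.mem_union] at hx ⊢
    rcases le_abs.1 hx with h | h
    · exact Or.inl h
    · right; linarith
  calc _ ≤ _ := measureReal_mono hsub
    _ ≤ _ := measureReal_union_le _ _
    _ ≤ _ := add_le_add h1 h2
    _ = _ := by ring
end

section
/- Let (Ω_i, 𝒜_i, μ_i), i = 1,…,n, be probability spaces and μ = ⊗_{i=1}^n μ_i their product. Let f : Ω → ℝ be a bounded measurable function whose Hoeffding decomposition with respect to μ is f = Σ_{k=2}^n f_k (i.e. the Hoeffding terms of order 0 and 1 vanish). Assume |𝔡|𝔡f||(x) ≤ 1 for all x, and ∫ ‖𝔇^{(2)} f‖_{HS}² dμ ≤ b² for some b ≥ 0. Then ∫ exp(|f| / (2(3 + b²))) dμ ≤ 2. -/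
/-!
The proof combines a modified logarithmic Sobolev inequality, valid on every product space,
with a second order Poincaré inequality.

For bounded measurable `g` one has `Ent(exp g) ≤ ∫ |𝔡g|² exp g` (`modified_lsi`). On one factor
the entropy is at most `Cov(g, exp g)`, which the two-point inequality
`(a - b)(eᵃ - eᵇ) ≤ (a - b)² (eᵃ + eᵇ) / 2` bounds by the `𝔡`-energy (`one_factor`). The product
case follows by tensorization: `log(G / ∫ G)` is telescoped along successive partial averages of
`G = exp g`, and each increment is a test function for the variational formula of the entropy in
one coordinate (`entropy_step`).

Herbst's argument (`herbst`) turns entropy bounds into exponential moment bounds, in two ways.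
* For `f` of mean zero, Gibbs' variational principle and Jensen's inequality give
  `∫ exp(s f) ≤ ∫ exp(2 s² |𝔡f|²)` (`integral_exp_le_ddNorm`).
* Since `g = |𝔡f|` satisfies `|𝔡g| ≤ 1`, it is sub-Gaussian,
  `∫ exp(w (g - ∫ g)) ≤ exp(w²)`, and Gaussian averaging over `w` gives
  `∫ exp(g² / 8) ≤ √2 exp((∫ g)² / 4)` (`integral_exp_sq_le`).

The mean of `g` is controlled by `(∫ g)² ≤ ∫ |𝔡f|² = ∑ᵢ ‖𝔇ᵢf‖² ≤ ∫ ‖𝔇⁽²⁾f‖² ≤ b²`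
(`integral_ddNorm_sq_le`): as the Hoeffding terms of order one vanish, `𝔇ᵢf` has mean zero in
the variables other than `xᵢ`, and the Efron–Stein inequality applies in those variables.

With `s = 1/4`, applied to `f` and `-f`, this yields `∫ exp(|f| / 4) ≤ 2√2 exp(b² / 4)`. Jensen's
inequality with the power `2 / (3 + b²)` then gives the bound
`exp((3 log 2 + b²/2) / (3 + b²)) ≤ 2`.
-/

open MeasureTheory

variable {n : ℕ} {Ω : Fin n → Type*} [∀ i, MeasurableSpace (Ω i)]

/-- The difference operator `𝔇ᵢ f(x) = f(x) − ∫ f(x₁,…,yᵢ,…,xₙ) μᵢ(dyᵢ)`. -/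
noncomputable def DD (μ : ∀ i, Measure (Ω i)) (f : (∀ i, Ω i) → ℝ) (i : Fin n)
    (x : ∀ i, Ω i) : ℝ :=
  f x - ∫ y, f (Function.update x i y) ∂(μ i)

/-- The squared Hilbert–Schmidt norm `‖𝔇⁽²⁾f(x)‖²_HS` of the de-diagonalized Hessian,
whose `(i,j)` entry is `𝔇ᵢⱼ f(x)` for `i ≠ j` and `0` on the diagonal. -/
noncomputable def D2HSsq (μ : ∀ i, Measure (Ω i)) (f : (∀ i, Ω i) → ℝ)
    (x : ∀ i, Ω i) : ℝ :=
  ∑ i, ∑ j, if i = j then 0 else DD μ (DD μ f j) i x ^ 2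

/-- `h` is a family of Hoeffding kernels: `h S` depends only on the coordinates in `S`,
is integrable in each coordinate, and integrates to zero in each of its own variables. -/
structure IsHoeffdingKernels (μ : ∀ i, Measure (Ω i))
    (h : Finset (Fin n) → (∀ i, Ω i) → ℝ) : Prop where
  meas : ∀ S, Measurable (h S)
  localized : ∀ S, ∀ x y : ∀ i, Ω i, (∀ i ∈ S, x i = y i) → h S x = h S y
  integrable : ∀ S, ∀ i : Fin n, ∀ x : ∀ i, Ω i,
    Integrable (fun y => h S (Function.update x i y)) (μ i)
  degenerate : ∀ S, ∀ i ∈ S, ∀ x : ∀ i, Ω i,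
    (∫ y, h S (Function.update x i y) ∂(μ i)) = 0

/-! ### Bounded measurable functions -/

/-- Bounded measurable real functions: the class in which the whole argument takes place. -/
def BddMeas {α : Type*} [MeasurableSpace α] (F : α → ℝ) : Prop :=
  Measurable F ∧ ∃ C, ∀ x, |F x| ≤ C

namespace BddMeas

section general

variable {α β : Type*} [MeasurableSpace α] [MeasurableSpace β] {F G : α → ℝ}

lemma integrable (hF : BddMeas F) (ν : Measure α) [IsFiniteMeasure ν] : Integrable F ν := by
  obtain ⟨hm, C, hC⟩ := hF
  exact Integrable.of_bound hm.aestronglyMeasurable C (Filter.Eventually.of_forall hC)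

lemma const (c : ℝ) : BddMeas (fun _ : α => c) := ⟨measurable_const, |c|, fun _ => le_rfl⟩

lemma add (hF : BddMeas F) (hG : BddMeas G) : BddMeas (fun x => F x + G x) := by
  obtain ⟨hm, C, hC⟩ := hF
  obtain ⟨hm', C', hC'⟩ := hG
  exact ⟨hm.add hm', C + C', fun x => (abs_add_le _ _).trans (add_le_add (hC x) (hC' x))⟩

lemma neg (hF : BddMeas F) : BddMeas (fun x => - F x) := by
  obtain ⟨hm, C, hC⟩ := hF
  exact ⟨hm.neg, C, fun x => by rw [abs_neg]; exact hC x⟩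

lemma sub (hF : BddMeas F) (hG : BddMeas G) : BddMeas (fun x => F x - G x) := by
  simpa only [sub_eq_add_neg] using hF.add hG.neg

lemma mul (hF : BddMeas F) (hG : BddMeas G) : BddMeas (fun x => F x * G x) := by
  obtain ⟨hm, C, hC⟩ := hF
  obtain ⟨hm', C', hC'⟩ := hG
  refine ⟨hm.mul hm', C * C', fun x => ?_⟩
  rw [abs_mul]
  exact mul_le_mul (hC x) (hC' x) (abs_nonneg _) ((abs_nonneg _).trans (hC x))

lemma const_mul (c : ℝ) (hF : BddMeas F) : BddMeas (fun x => c * F x) := (const c).mul hF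

lemma sq (hF : BddMeas F) : BddMeas (fun x => F x ^ 2) := by
  simpa only [pow_two] using hF.mul hF

lemma abs (hF : BddMeas F) : BddMeas (fun x => |F x|) := by
  obtain ⟨hm, C, hC⟩ := hF
  exact ⟨hm.abs, C, fun x => by rw [abs_abs]; exact hC x⟩

lemma exp (hF : BddMeas F) : BddMeas (fun x => Real.exp (F x)) := by
  obtain ⟨hm, C, hC⟩ := hF
  refine ⟨hm.exp, Real.exp C, fun x => ?_⟩
  rw [abs_of_pos (Real.exp_pos _)]
  exact Real.exp_le_exp.2 ((le_abs_self _).trans (hC x))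

lemma sqrt (hF : BddMeas F) : BddMeas (fun x => Real.sqrt (F x)) := by
  obtain ⟨hm, C, hC⟩ := hF
  refine ⟨hm.sqrt, Real.sqrt C, fun x => ?_⟩
  rw [abs_of_nonneg (Real.sqrt_nonneg _)]
  exact Real.sqrt_le_sqrt ((le_abs_self _).trans (hC x))

lemma log (hF : BddMeas F) {ε : ℝ} (hε : 0 < ε) (h : ∀ x, ε ≤ F x) :
    BddMeas (fun x => Real.log (F x)) := by
  obtain ⟨hm, C, hC⟩ := hF
  refine ⟨hm.log, max |Real.log ε| |Real.log C|, fun x => ?_⟩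
  have h1 : Real.log ε ≤ Real.log (F x) := Real.log_le_log hε (h x)
  have h2 : Real.log (F x) ≤ Real.log C :=
    Real.log_le_log (hε.trans_le (h x)) ((le_abs_self _).trans (hC x))
  exact abs_le_max_abs_abs h1 h2

lemma comp (hF : BddMeas F) {e : β → α} (he : Measurable e) : BddMeas (fun x => F (e x)) := by
  obtain ⟨hm, C, hC⟩ := hF
  exact ⟨hm.comp he, C, fun x => hC _⟩

lemma sum {ι : Type*} (s : Finset ι) {F : ι → α → ℝ} (hF : ∀ i, BddMeas (F i)) :
    BddMeas (fun x => ∑ i ∈ s, F i x) := by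
  classical
  induction s using Finset.induction_on with
  | empty => simpa using const 0
  | insert a s ha ih => simpa only [Finset.sum_insert ha] using (hF a).add ih

lemma integral_right {F : α × β → ℝ} (hF : BddMeas F) (ν : Measure β) [IsProbabilityMeasure ν] :
    BddMeas (fun x => ∫ y, F (x, y) ∂ν) := by
  obtain ⟨hm, C, hC⟩ := hF
  refine ⟨(StronglyMeasurable.integral_prod_right (f := fun x y => F (x, y)) (ν := ν)
    hm.stronglyMeasurable).measurable, C, fun x => ?_⟩
  have := norm_integral_le_of_norm_le_const (μ := ν) (f := fun y => F (x, y)) (C := C)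
    (Filter.Eventually.of_forall fun y => hC _)
  simpa using this

end general

end BddMeas

/-! ### Inequalities on a single probability space -/

/-- The logarithmic mean of `exp a` and `exp b` is at most their arithmetic mean. -/
lemma sub_mul_exp_sub_le (a b : ℝ) :
    (a - b) * (Real.exp a - Real.exp b)
      ≤ (a - b) ^ 2 * (Real.exp a + Real.exp b) / 2 := by
  have key : ∀ t : ℝ, 0 ≤ t → 2 * (Real.exp t - 1) ≤ t * (Real.exp t + 1) := by
    intro t ht
    have hmono : MonotoneOn (fun t : ℝ => t * (Real.exp t + 1) - 2 * (Real.exp t - 1))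
        (Set.Ici 0) := by
      have hd : ∀ t : ℝ, HasDerivAt (fun t : ℝ => t * (Real.exp t + 1) - 2 * (Real.exp t - 1))
          (1 * (Real.exp t + 1) + t * Real.exp t - 2 * Real.exp t) t := fun t =>
        ((hasDerivAt_id t).mul ((Real.hasDerivAt_exp t).add_const 1)).sub
          (((Real.hasDerivAt_exp t).sub_const 1).const_mul 2)
      refine monotoneOn_of_deriv_nonneg (convex_Ici 0)
        (fun t _ => (hd t).continuousAt.continuousWithinAt)
        (fun t _ => (hd t).differentiableAt.differentiableWithinAt) (fun t _ => ?_)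
      rw [(hd t).deriv]
      have h1 := Real.add_one_le_exp (-t)
      have h2 : Real.exp (-t) * Real.exp t = 1 := by rw [← Real.exp_add]; simp
      nlinarith [Real.exp_pos t]
    have := hmono (Set.mem_Ici.2 le_rfl) (Set.mem_Ici.2 ht) ht
    simp at this
    linarith
  have main : ∀ a b : ℝ, b ≤ a → (a - b) * (Real.exp a - Real.exp b)
      ≤ (a - b) ^ 2 * (Real.exp a + Real.exp b) / 2 := by
    intro a b hab
    have h := key (a - b) (by linarith)
    have e : Real.exp a = Real.exp (a - b) * Real.exp b := by rw [← Real.exp_add]; ring_nf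
    rw [e]
    have hp : 0 ≤ (a - b) * Real.exp b := mul_nonneg (by linarith) (Real.exp_pos b).le
    nlinarith [mul_le_mul_of_nonneg_left h hp]
  rcases le_total b a with hab | hab
  · exact main a b hab
  · have := main b a hab
    nlinarith

section single

variable {α : Type*} [MeasurableSpace α] (ν : Measure α) [IsProbabilityMeasure ν]

lemma integral_exp_pos' {φ : α → ℝ} (hφ : BddMeas φ) : 0 < ∫ x, Real.exp (φ x) ∂ν :=
  integral_exp_pos (hφ.exp.integrable ν)

/-- Gibbs variational principle: the entropy of `exp φ` dominates `∫ exp φ * ψ` whenever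
`∫ exp ψ = 1`. -/
lemma gibbs {φ ψ : α → ℝ} (hφ : BddMeas φ) (hψ : BddMeas ψ)
    (h1 : ∫ x, Real.exp (ψ x) ∂ν = 1) :
    ∫ x, Real.exp (φ x) * ψ x ∂ν ≤ ∫ x, Real.exp (φ x) * φ x ∂ν
      - (∫ x, Real.exp (φ x) ∂ν) * Real.log (∫ x, Real.exp (φ x) ∂ν) := by
  have hM := integral_exp_pos' ν hφ
  set M := ∫ x, Real.exp (φ x) ∂ν with hMdef
  have hpt : ∀ x, Real.exp (φ x) * ψ x ≤ Real.exp (φ x) * φ x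
      + (M * Real.exp (ψ x) - Real.exp (φ x) * (1 + Real.log M)) := by
    intro x
    have h := Real.add_one_le_exp (ψ x - φ x + Real.log M)
    have e : Real.exp (φ x) * Real.exp (ψ x - φ x + Real.log M) = M * Real.exp (ψ x) := by
      rw [← Real.exp_add, show φ x + (ψ x - φ x + Real.log M) = Real.log M + ψ x by ring,
        Real.exp_add, Real.exp_log hM]
    nlinarith [mul_le_mul_of_nonneg_left h (Real.exp_pos (φ x)).le]
  have hA := (hφ.exp.mul hφ).integrable ν
  have hB := (hψ.exp.const_mul M).integrable ν
  have hC := (hφ.exp.mul (BddMeas.const (1 + Real.log M))).integrable ν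
  have h := integral_mono ((hφ.exp.mul hψ).integrable ν) (hA.add (hB.sub hC)) hpt
  rw [integral_add' hA (hB.sub hC), integral_sub' hB hC, integral_const_mul, integral_mul_const,
    h1, ← hMdef] at h
  linarith

lemma integral_le_log_integral_exp {φ : α → ℝ} (hφ : BddMeas φ) :
    ∫ x, φ x ∂ν ≤ Real.log (∫ x, Real.exp (φ x) ∂ν) := by
  have hM := integral_exp_pos' ν hφ
  rw [Real.le_log_iff_exp_le hM]
  set m := ∫ x, φ x ∂ν with hm
  have hpt : ∀ x, Real.exp m * (1 - m + φ x) ≤ Real.exp (φ x) := by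
    intro x
    have h := Real.add_one_le_exp (φ x - m)
    have e : Real.exp m * Real.exp (φ x - m) = Real.exp (φ x) := by
      rw [← Real.exp_add]; ring_nf
    nlinarith [mul_le_mul_of_nonneg_left h (Real.exp_pos m).le]
  have h := integral_mono ((((BddMeas.const (1 - m)).add hφ).const_mul (Real.exp m)).integrable ν)
    (hφ.exp.integrable ν) hpt
  rw [integral_const_mul, integral_add (integrable_const _) (hφ.integrable ν), ← hm] at h
  simpa using h

/-- Jensen for powers `p ∈ [0, 1]` of `exp X`. -/
lemma integral_exp_mul_le {X : α → ℝ} (hX : BddMeas X) {p : ℝ} (h0 : 0 ≤ p) (h1 : p ≤ 1) :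
    ∫ x, Real.exp (p * X x) ∂ν ≤ Real.exp (p * Real.log (∫ x, Real.exp (X x) ∂ν)) := by
  have hM := integral_exp_pos' ν hX
  set M := ∫ x, Real.exp (X x) ∂ν with hMdef
  have hpt : ∀ x, Real.exp (p * X x) ≤
      Real.exp (p * Real.log M) * ((p * M⁻¹) * Real.exp (X x) + (1 - p)) := by
    intro x
    have h := convexOn_exp.2 (Set.mem_univ (X x - Real.log M)) (Set.mem_univ 0) h0
      (sub_nonneg.2 h1) (by ring)
    have e1 : Real.exp (p * X x)
        = Real.exp (p * Real.log M) * Real.exp (p * (X x - Real.log M)) := by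
      rw [← Real.exp_add]; ring_nf
    have e2 : Real.exp (X x - Real.log M) = M⁻¹ * Real.exp (X x) := by
      rw [Real.exp_sub, Real.exp_log hM]; field_simp
    simp only [smul_eq_mul, mul_zero, add_zero, Real.exp_zero, mul_one, e2] at h
    rw [e1]
    refine mul_le_mul_of_nonneg_left ?_ (Real.exp_pos _).le
    linarith
  have hB := (hX.exp.const_mul (p * M⁻¹))
  have h := integral_mono ((hX.const_mul p).exp.integrable ν)
    (((hB.add (BddMeas.const (1 - p))).const_mul _).integrable ν) hpt
  rw [integral_const_mul, integral_add (hB.integrable ν) (integrable_const _),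
    integral_const_mul, ← hMdef] at h
  refine h.trans (le_of_eq ?_)
  have : p * M⁻¹ * M = p := by field_simp
  simp [this]

/-- Entropy of `exp φ` on one factor, bounded through `Cov(φ, exp φ)` by the
`𝔡`-energy; the entropy enters in its dual form. -/
lemma one_factor {φ ψ : α → ℝ} (hφ : BddMeas φ) (hψ : BddMeas ψ)
    (h1 : ∫ x, Real.exp (ψ x) ∂ν = 1) :
    ∫ x, Real.exp (φ x) * ψ x ∂ν ≤
      ∫ y, Real.exp (φ y) * ((1 / 2) * ∫ z, (φ y - φ z) ^ 2 ∂ν) ∂ν := by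
  have hM := integral_exp_pos' ν hφ
  have hg := gibbs ν hφ hψ h1
  have hj := integral_le_log_integral_exp ν hφ
  set M := ∫ x, Real.exp (φ x) ∂ν with hMdef
  set A1 := ∫ x, Real.exp (φ x) * φ x ∂ν with hA1
  set m1 := ∫ x, φ x ∂ν with hm1
  set A2 := ∫ x, Real.exp (φ x) * φ x ^ 2 ∂ν with hA2
  set m2 := ∫ x, φ x ^ 2 ∂ν with hm2
  have iφ := hφ.integrable ν
  have iφ2 := hφ.sq.integrable ν
  have ie := hφ.exp.integrable ν
  have ieφ := (hφ.exp.mul hφ).integrable ν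
  have ieφ2 := (hφ.exp.mul hφ.sq).integrable ν
  have hin : ∀ y, ∫ z, (φ y - φ z) ^ 2 ∂ν = φ y ^ 2 - 2 * φ y * m1 + m2 := by
    intro y
    have e : (fun z => (φ y - φ z) ^ 2) = fun z => φ y ^ 2 - 2 * φ y * φ z + φ z ^ 2 := by
      funext z; ring
    rw [e, integral_add (((BddMeas.const _).sub (hφ.const_mul _)).integrable ν) iφ2,
      integral_sub (integrable_const _) (iφ.const_mul _), integral_const_mul]
    simp [hm1, hm2]
  have hR : ∫ y, Real.exp (φ y) * ((1 / 2) * ∫ z, (φ y - φ z) ^ 2 ∂ν) ∂ν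
      = (1 / 2) * (A2 - 2 * m1 * A1 + m2 * M) := by
    have e : (fun y => Real.exp (φ y) * ((1 / 2) * ∫ z, (φ y - φ z) ^ 2 ∂ν)) = fun y =>
        (1 / 2) * (Real.exp (φ y) * φ y ^ 2 - 2 * m1 * (Real.exp (φ y) * φ y)
          + m2 * Real.exp (φ y)) := by
      funext y; rw [hin]; ring
    rw [e, integral_const_mul, integral_add
        (((hφ.exp.mul hφ.sq).sub ((hφ.exp.mul hφ).const_mul _)).integrable ν) (ie.const_mul _),
      integral_sub ieφ2 (ieφ.const_mul _), integral_const_mul, integral_const_mul]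
  -- Integrate the two-point inequality in `z` first, then in `y`.
  have hz : ∀ y, Real.exp (φ y) * φ y - φ y * M - m1 * Real.exp (φ y) + A1 ≤
      (1 / 2) * (Real.exp (φ y) * φ y ^ 2 - 2 * m1 * (Real.exp (φ y) * φ y)
        + m2 * Real.exp (φ y) + φ y ^ 2 * M - 2 * φ y * A1 + A2) := by
    intro y
    have hpt : ∀ z, (Real.exp (φ y) * φ y - φ y * Real.exp (φ z)) -
          (Real.exp (φ y) * φ z - Real.exp (φ z) * φ z) ≤
        (1 / 2) * (((Real.exp (φ y) * φ y ^ 2 - 2 * (Real.exp (φ y) * φ y) * φ z)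
          + (Real.exp (φ y) * φ z ^ 2 + φ y ^ 2 * Real.exp (φ z))) -
          (2 * φ y * (Real.exp (φ z) * φ z) - Real.exp (φ z) * φ z ^ 2)) := by
      intro z
      have := sub_mul_exp_sub_le (φ y) (φ z)
      linarith
    have i1 := (integrable_const (μ := ν) (Real.exp (φ y) * φ y)).sub (ie.const_mul (φ y))
    have i2 := (iφ.const_mul (Real.exp (φ y))).sub ieφ
    have j1 := (integrable_const (μ := ν) (Real.exp (φ y) * φ y ^ 2)).sub
      (iφ.const_mul (2 * (Real.exp (φ y) * φ y)))
    have j2 := (iφ2.const_mul (Real.exp (φ y))).add (ie.const_mul (φ y ^ 2))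
    have j3 := (ieφ.const_mul (2 * φ y)).sub ieφ2
    have h := integral_mono (i1.sub i2) (((j1.add j2).sub j3).const_mul (1 / 2)) hpt
    rw [integral_sub' i1 i2, integral_sub' (integrable_const _) (ie.const_mul _),
      integral_sub' (iφ.const_mul _) ieφ] at h
    rw [integral_const_mul (1 / 2 : ℝ), integral_sub' (j1.add j2) j3, integral_add' j1 j2,
      integral_sub' (integrable_const _) (iφ.const_mul _),
      integral_add' (iφ2.const_mul _) (ie.const_mul _),
      integral_sub' (ieφ.const_mul _) ieφ2] at h
    simp only [integral_const_mul, integral_const, probReal_univ, one_smul] at h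
    linarith
  have hfin : A1 - m1 * M - m1 * M + A1 ≤ (1 / 2) * (A2 - 2 * m1 * A1
        + m2 * M + m2 * M - 2 * m1 * A1 + A2) := by
    have i1 := ieφ.sub (iφ.mul_const M)
    have i2 := i1.sub (ie.const_mul m1)
    have j1 := ieφ2.sub (ieφ.const_mul (2 * m1))
    have j2 := j1.add (ie.const_mul m2)
    have j3 := j2.add (iφ2.mul_const M)
    have j4 := j3.sub ((iφ.const_mul 2).mul_const A1)
    have h := integral_mono (i2.add (integrable_const A1))
      ((j4.add (integrable_const A2)).const_mul (1 / 2)) hz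
    rw [integral_add' i2 (integrable_const _), integral_sub' i1 (ie.const_mul _),
      integral_sub' ieφ (iφ.mul_const _), integral_const_mul (1 / 2 : ℝ),
      integral_add' j4 (integrable_const _), integral_sub' j3 ((iφ.const_mul 2).mul_const A1),
      integral_add' j2 (iφ2.mul_const M), integral_add' j1 (ie.const_mul _),
      integral_sub' ieφ2 (ieφ.const_mul _)] at h
    simp only [integral_const_mul, integral_mul_const, integral_const, probReal_univ,
      one_smul] at h
    linarith
  rw [hR]
  nlinarith [mul_le_mul_of_nonneg_left hj hM.le]

/-- Herbst's argument: the entropy bound says that `u ↦ log E exp(uF) / u - c u` is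
nonincreasing, and its limit at `0` is the mean of `F`. -/
lemma herbst {F : α → ℝ} (hF : BddMeas F) {c s : ℝ} (hs : 0 < s)
    (hent : ∀ u, 0 < u → u ≤ s →
      ∫ x, Real.exp (u * F x) * (u * F x) ∂ν
        - (∫ x, Real.exp (u * F x) ∂ν) * Real.log (∫ x, Real.exp (u * F x) ∂ν)
      ≤ c * u ^ 2 * ∫ x, Real.exp (u * F x) ∂ν) :
    ∫ x, Real.exp (s * F x) ∂ν ≤ Real.exp (s * ∫ x, F x ∂ν + c * s ^ 2) := by
  have hset : ProbabilityTheory.integrableExpSet F ν = Set.univ :=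
    Set.eq_univ_of_forall fun u => (hF.const_mul u).exp.integrable ν
  have hM : ∀ u, 0 < ∫ x, Real.exp (u * F x) ∂ν := fun u => integral_exp_pos' ν (hF.const_mul u)
  have hd : ∀ u, HasDerivAt (fun u => Real.log (∫ x, Real.exp (u * F x) ∂ν))
      ((∫ x, F x * Real.exp (u * F x) ∂ν) / ∫ x, Real.exp (u * F x) ∂ν) u := by
    intro u
    have := ProbabilityTheory.hasDerivAt_mgf (X := F) (μ := ν) (t := u) (by simp [hset])
    exact HasDerivAt.log this (hM u).ne'
  set Λ : ℝ → ℝ := fun u => Real.log (∫ x, Real.exp (u * F x) ∂ν) with hΛ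
  have hanti : AntitoneOn (fun u => Λ u / u - c * u) (Set.Ioc 0 s) := by
    have hd' : ∀ u, 0 < u → HasDerivAt (fun u => Λ u / u - c * u)
        ((((∫ x, F x * Real.exp (u * F x) ∂ν) / ∫ x, Real.exp (u * F x) ∂ν) * u - Λ u * 1)
          / u ^ 2 - c * 1) u := fun u hu =>
      ((hd u).div (hasDerivAt_id u) hu.ne').sub ((hasDerivAt_id u).const_mul c)
    refine antitoneOn_of_deriv_nonpos (convex_Ioc 0 s)
      (fun u hu => (hd' u hu.1).continuousAt.continuousWithinAt)
      (fun u hu => (hd' u ?_).differentiableAt.differentiableWithinAt) (fun u hu => ?_)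
    · rw [interior_Ioc] at hu; exact hu.1
    · rw [interior_Ioc] at hu
      rw [(hd' u hu.1).deriv]
      have h := hent u hu.1 hu.2.le
      have e : ∫ x, Real.exp (u * F x) * (u * F x) ∂ν
          = u * ∫ x, F x * Real.exp (u * F x) ∂ν := by
        rw [← integral_const_mul]; congr 1; funext x; ring
      rw [e] at h
      have hu2 : 0 < u ^ 2 := pow_pos hu.1 2
      have hMu := hM u
      rw [mul_one, mul_one, sub_nonpos, div_le_iff₀ hu2, div_mul_eq_mul_div, sub_le_iff_le_add,
        div_le_iff₀ hMu]
      simp only [hΛ]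
      linarith
  have hlim : Filter.Tendsto (fun u => Λ u / u - c * u) (nhdsWithin 0 (Set.Ioi 0))
      (nhds (∫ x, F x ∂ν)) := by
    have h0 := (hd 0).tendsto_slope_zero_right
    have hc : Filter.Tendsto (fun u : ℝ => c * u) (nhdsWithin 0 (Set.Ioi 0)) (nhds 0) := by
      have : Filter.Tendsto (fun u : ℝ => c * u) (nhds 0) (nhds (c * 0)) :=
        (continuous_const.mul continuous_id).tendsto 0
      rw [mul_zero] at this
      exact this.mono_left nhdsWithin_le_nhds
    have := h0.sub hc
    simp only [zero_add, zero_mul, Real.exp_zero, integral_const, probReal_univ,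
      sub_zero, smul_eq_mul, mul_one, div_one] at this
    refine this.congr fun u => ?_
    simp only [hΛ, zero_mul, Real.exp_zero, integral_const, probReal_univ, one_smul,
      Real.log_one]
    ring
  have hle : Λ s / s - c * s ≤ ∫ x, F x ∂ν := by
    refine ge_of_tendsto hlim ?_
    filter_upwards [Ioc_mem_nhdsGT hs] with u hu
    exact hanti hu ⟨hs, le_rfl⟩ hu.2
  rw [← Real.log_le_iff_le_exp (hM s)]
  have h2 : Λ s / s ≤ ∫ x, F x ∂ν + c * s := by linarith
  rw [div_le_iff₀ hs] at h2
  simp only [hΛ] at h2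
  linarith

lemma integral_exp_gauss (a w : ℝ) (ha : 0 < a) :
    Integrable (fun z : ℝ => Real.exp (-a * z ^ 2 + w * z)) ∧
    ∫ z : ℝ, Real.exp (-a * z ^ 2 + w * z)
      = Real.sqrt (Real.pi / a) * Real.exp (w ^ 2 / (4 * a)) := by
  have e : (fun z : ℝ => Real.exp (-a * z ^ 2 + w * z)) = fun z : ℝ =>
      Real.exp (-a * (z - w / (2 * a)) ^ 2) * Real.exp (w ^ 2 / (4 * a)) := by
    funext z
    rw [← Real.exp_add]
    congr 1
    field_simp
    ring
  rw [e]
  constructor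
  · exact ((integrable_exp_neg_mul_sq ha).comp_sub_right (w / (2 * a))).mul_const _
  · rw [integral_mul_const, integral_sub_right_eq_self (fun z : ℝ => Real.exp (-a * z ^ 2)),
      integral_gaussian]

/-- A function with `log E exp(w (g - m)) ≤ w²` for all `w` has Gaussian square
integrability; obtained by writing `exp(g² / 8)` as a Gaussian average of exponentials of
multiples of `g`. -/
lemma integral_exp_sq_le {g : α → ℝ} (hg : BddMeas g) {m : ℝ}
    (h : ∀ w : ℝ, ∫ x, Real.exp (w * g x) ∂ν ≤ Real.exp (w * m + w ^ 2)) :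
    ∫ x, Real.exp (g x ^ 2 / 8) ∂ν ≤ Real.sqrt 2 * Real.exp (m ^ 2 / 4) := by
  have hprod : Integrable (fun p : α × ℝ =>
      Real.exp (-(1 / 2) * p.2 ^ 2 + (g p.1 / 2) * p.2)) (ν.prod volume) := by
    have hm : Measurable (fun p : α × ℝ =>
        Real.exp (-(1 / 2) * p.2 ^ 2 + (g p.1 / 2) * p.2)) := by
      have := hg.1
      fun_prop
    rw [integrable_prod_iff hm.aestronglyMeasurable]
    refine ⟨Filter.Eventually.of_forall fun x =>
      (integral_exp_gauss (1 / 2) (g x / 2) (by norm_num)).1, ?_⟩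
    simp only [Real.norm_eq_abs, Real.abs_exp]
    simp only [(integral_exp_gauss (1 / 2) _ (by norm_num)).2]
    have : BddMeas (fun x => Real.sqrt (Real.pi / (1 / 2))
        * Real.exp ((1 / (4 * (4 * (1 / 2)))) * g x ^ 2)) := (hg.sq.const_mul _).exp.const_mul _
    refine (this.integrable ν).congr (Filter.Eventually.of_forall fun x => ?_)
    simp only
    ring_nf
  have hswap := integral_integral_swap (f := fun (x : α) (z : ℝ) =>
      Real.exp (-(1 / 2) * z ^ 2 + (g x / 2) * z)) hprod
  simp only [(integral_exp_gauss (1 / 2) _ (by norm_num)).2] at hswap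
  rw [integral_const_mul] at hswap
  have hR : ∫ z : ℝ, ∫ x, Real.exp (-(1 / 2) * z ^ 2 + (g x / 2) * z) ∂ν ≤
      ∫ z : ℝ, Real.exp (-(1 / 4) * z ^ 2 + (m / 2) * z) := by
    refine integral_mono hprod.integral_prod_right
      (integral_exp_gauss (1 / 4) (m / 2) (by norm_num)).1 fun z => ?_
    have e1 : ∫ x, Real.exp (-(1 / 2) * z ^ 2 + (g x / 2) * z) ∂ν
        = Real.exp (-(1 / 2) * z ^ 2) * ∫ x, Real.exp ((z / 2) * g x) ∂ν := by
      rw [← integral_const_mul]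
      congr 1; funext x
      rw [← Real.exp_add]; ring_nf
    have e2 : Real.exp (-(1 / 4) * z ^ 2 + (m / 2) * z)
        = Real.exp (-(1 / 2) * z ^ 2) * Real.exp ((z / 2) * m + (z / 2) ^ 2) := by
      rw [← Real.exp_add]; ring_nf
    simp only [e1, e2]
    exact mul_le_mul_of_nonneg_left (h _) (Real.exp_pos _).le
  rw [← hswap, (integral_exp_gauss (1 / 4) (m / 2) (by norm_num)).2] at hR
  have es : Real.sqrt (Real.pi / (1 / 4)) = Real.sqrt (Real.pi / (1 / 2)) * Real.sqrt 2 := by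
    rw [← Real.sqrt_mul (by positivity)]; congr 1; ring
  rw [es, mul_assoc] at hR
  have := le_of_mul_le_mul_left hR (by positivity)
  ring_nf at this ⊢
  exact this

end single

/-! ### Partial averaging operators on the product space -/

/-- Partial averaging `E_j F(x) = ∫ F(x₁,…,y_j,…,xₙ) μ_j(dy_j)`. -/
noncomputable def avg (μ : ∀ i, Measure (Ω i)) (j : Fin n) (F : (∀ i, Ω i) → ℝ)
    (x : ∀ i, Ω i) : ℝ :=
  ∫ y, F (Function.update x j y) ∂(μ j)

/-- Successive partial averaging over the coordinates in a list, head first. -/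
noncomputable def avgList (μ : ∀ i, Measure (Ω i)) :
    List (Fin n) → ((∀ i, Ω i) → ℝ) → (∀ i, Ω i) → ℝ
  | [], F => F
  | j :: l, F => avgList μ l (avg μ j F)

section product

set_option linter.unusedSectionVars false

variable (μ : ∀ i, Measure (Ω i)) [∀ i, IsProbabilityMeasure (μ i)]

lemma DD_eq (F : (∀ i, Ω i) → ℝ) (j : Fin n) : DD μ F j = fun x => F x - avg μ j F x := rfl

lemma BddMeas.avg {F : (∀ i, Ω i) → ℝ} (hF : BddMeas F) (j : Fin n) : BddMeas (avg μ j F) :=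
  (hF.comp (measurable_update' (a := j))).integral_right (μ j)

lemma BddMeas.avgList (l : List (Fin n)) {F : (∀ i, Ω i) → ℝ} (hF : BddMeas F) :
    BddMeas (avgList μ l F) := by
  induction l generalizing F with
  | nil => exact hF
  | cons j l ih => exact ih (hF.avg μ j)

lemma BddMeas.DD {F : (∀ i, Ω i) → ℝ} (hF : BddMeas F) (j : Fin n) : BddMeas (DD μ F j) :=
  hF.sub (hF.avg μ j)

/-- Resampling one coordinate preserves the product measure. -/
lemma measurePreserving_update (j : Fin n) :
    MeasurePreserving (fun p : (∀ i, Ω i) × Ω j => Function.update p.1 j p.2)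
      ((Measure.pi μ).prod (μ j)) (Measure.pi μ) := by
  refine ⟨measurable_update', ?_⟩
  symm
  refine Measure.pi_eq fun s hs => ?_
  rw [Measure.map_apply measurable_update' (MeasurableSet.univ_pi hs)]
  have e : (fun p : (∀ i, Ω i) × Ω j => Function.update p.1 j p.2) ⁻¹' (Set.pi Set.univ s)
      = (Set.pi Set.univ (Function.update s j Set.univ)) ×ˢ (s j) := by
    ext ⟨x, y⟩
    simp only [Set.mem_preimage, Set.mem_pi, Set.mem_univ, true_imp_iff, Set.mem_prod]
    constructor
    · intro h
      refine ⟨fun i => ?_, by simpa using h j⟩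
      by_cases hi : i = j
      · subst hi; simp
      · simpa [hi] using h i
    · rintro ⟨h, hy⟩ i
      by_cases hi : i = j
      · subst hi; simpa using hy
      · simpa [hi] using h i
  rw [e, Measure.prod_prod, Measure.pi_pi, ← Finset.prod_erase_mul _ _ (Finset.mem_univ j),
    ← Finset.prod_erase_mul Finset.univ (fun i => μ i (s i)) (Finset.mem_univ j)]
  simp only [Function.update_self, measure_univ, mul_one]
  congr 1
  refine Finset.prod_congr rfl fun i hi => ?_
  rw [Function.update_of_ne (Finset.ne_of_mem_erase hi)]

lemma integral_avg {F : (∀ i, Ω i) → ℝ} (hF : BddMeas F) (j : Fin n) :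
    ∫ x, avg μ j F x ∂(Measure.pi μ) = ∫ x, F x ∂(Measure.pi μ) := by
  have hp := measurePreserving_update μ j
  have h1 := (hF.comp (measurable_update' (a := j))).integrable ((Measure.pi μ).prod (μ j))
  have h2 := integral_prod _ h1
  have h3 := integral_map (μ := (Measure.pi μ).prod (μ j)) hp.measurable.aemeasurable
    (f := F) hF.1.aestronglyMeasurable
  rw [hp.map_eq] at h3
  rw [h3, h2]
  rfl

lemma integral_avgList (l : List (Fin n)) {F : (∀ i, Ω i) → ℝ} (hF : BddMeas F) :
    ∫ x, avgList μ l F x ∂(Measure.pi μ) = ∫ x, F x ∂(Measure.pi μ) := by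
  induction l generalizing F with
  | nil => rfl
  | cons j l ih => exact (ih (hF.avg μ j)).trans (integral_avg μ hF j)

lemma avg_update (j : Fin n) (F : (∀ i, Ω i) → ℝ) (x : ∀ i, Ω i) (y : Ω j) :
    avg μ j F (Function.update x j y) = avg μ j F x := by
  simp [avg]

lemma avg_update_of_invariant {i : Fin n} (j : Fin n) {F : (∀ i, Ω i) → ℝ}
    (hF : ∀ x y, F (Function.update x i y) = F x) (x : ∀ i, Ω i) (y : Ω i) :
    avg μ j F (Function.update x i y) = avg μ j F x := by
  by_cases hij : i = j
  · subst hij; exact avg_update μ i F x y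
  · simp only [avg]
    congr 1; funext z
    rw [Function.update_comm hij, hF]

lemma avgList_update_of_invariant {i : Fin n} (l : List (Fin n)) {F : (∀ i, Ω i) → ℝ}
    (hF : ∀ x y, F (Function.update x i y) = F x) (x : ∀ i, Ω i) (y : Ω i) :
    avgList μ l F (Function.update x i y) = avgList μ l F x := by
  induction l generalizing F with
  | nil => exact hF x y
  | cons j l ih => exact ih (avg_update_of_invariant μ j hF)

lemma avgList_update_of_mem {i : Fin n} (l : List (Fin n)) (hi : i ∈ l) (F : (∀ i, Ω i) → ℝ)
    (x : ∀ i, Ω i) (y : Ω i) :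
    avgList μ l F (Function.update x i y) = avgList μ l F x := by
  induction l generalizing F with
  | nil => simp at hi
  | cons j l ih =>
    rcases List.mem_cons.1 hi with rfl | h
    · exact avgList_update_of_invariant μ l (avg_update μ i F) x y
    · exact ih h _

/-- Averaging over all coordinates yields the integral. -/
lemma avgList_univ {F : (∀ i, Ω i) → ℝ} (hF : BddMeas F) (x : ∀ i, Ω i) :
    avgList μ Finset.univ.toList F x = ∫ y, F y ∂(Measure.pi μ) := by
  have hc : ∀ y, avgList μ Finset.univ.toList F y = avgList μ Finset.univ.toList F x := by
    intro y
    have : ∀ s : Finset (Fin n), avgList μ Finset.univ.toList F (s.piecewise y x)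
        = avgList μ Finset.univ.toList F x := by
      intro s
      induction s using Finset.induction_on with
      | empty => simp
      | insert a s _ ih =>
        rw [Finset.piecewise_insert, avgList_update_of_mem μ _ (by simp), ih]
    simpa using this Finset.univ
  rw [← integral_avgList μ Finset.univ.toList hF]
  simp [hc]

lemma avg_mul_avg (j : Fin n) (F G : (∀ i, Ω i) → ℝ) (x : ∀ i, Ω i) :
    avg μ j (fun x => F x * avg μ j G x) x = avg μ j F x * avg μ j G x := by
  have h := avg_update μ j G x
  simp only [avg] at h ⊢
  simp only [h, integral_mul_const]

lemma integral_mul_avg {F G : (∀ i, Ω i) → ℝ} (hF : BddMeas F) (hG : BddMeas G) (j : Fin n) :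
    ∫ x, F x * avg μ j G x ∂(Measure.pi μ)
      = ∫ x, avg μ j F x * avg μ j G x ∂(Measure.pi μ) := by
  rw [← integral_avg μ (hF.mul (hG.avg μ j)) j]
  simp only [avg_mul_avg]

/-- `𝔇_j` is an orthogonal projection in `L²`. -/
lemma integral_DD_mul_DD {F G : (∀ i, Ω i) → ℝ} (hF : BddMeas F) (hG : BddMeas G) (j : Fin n) :
    ∫ x, DD μ F j x * DD μ G j x ∂(Measure.pi μ)
      = ∫ x, F x * G x ∂(Measure.pi μ) - ∫ x, F x * avg μ j G x ∂(Measure.pi μ) := by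
  have hF' := hF.avg μ j
  have hG' := hG.avg μ j
  have e : (fun x => DD μ F j x * DD μ G j x) = fun x =>
      (F x * G x - F x * avg μ j G x) - (G x * avg μ j F x - avg μ j F x * avg μ j G x) := by
    funext x; simp only [DD_eq]; ring
  rw [e, integral_sub (((hF.mul hG).sub (hF.mul hG')).integrable _)
      (((hG.mul hF').sub (hF'.mul hG')).integrable _),
    integral_sub ((hF.mul hG).integrable _) ((hF.mul hG').integrable _),
    integral_sub ((hG.mul hF').integrable _) ((hF'.mul hG').integrable _),
    integral_mul_avg μ hG hF j]
  have : ∫ x, avg μ j G x * avg μ j F x ∂(Measure.pi μ)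
      = ∫ x, avg μ j F x * avg μ j G x ∂(Measure.pi μ) := by
    congr 1; funext x; ring
  rw [this]; ring

/-! ### The Efron–Stein inequality and the second order Poincaré bound -/

/-- Telescoping form of the Efron–Stein inequality. Pairing the increments of the averaged
function `u` with a fixed `v` avoids commuting the averaging operators. -/
lemma efron_stein_aux (l : List (Fin n)) {v u : (∀ i, Ω i) → ℝ} (hv : BddMeas v)
    (hu : BddMeas u) :
    2 * (∫ x, v x * u x ∂(Measure.pi μ) - ∫ x, v x * avgList μ l u x ∂(Measure.pi μ)) ≤
      (l.map fun j => ∫ x, DD μ v j x ^ 2 ∂(Measure.pi μ)).sum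
        + (∫ x, u x ^ 2 ∂(Measure.pi μ) - ∫ x, avgList μ l u x ^ 2 ∂(Measure.pi μ)) := by
  induction l generalizing u with
  | nil => simp [avgList]
  | cons j l ih =>
    have h := ih (hu.avg μ j)
    have h1 := integral_DD_mul_DD μ hv hu j
    have h2 := integral_DD_mul_DD μ hu hu j
    rw [integral_mul_avg μ hu hu j] at h2
    have hDv := hv.DD μ j
    have hDu := hu.DD μ j
    have h3 : 2 * ∫ x, DD μ v j x * DD μ u j x ∂(Measure.pi μ) ≤
        ∫ x, DD μ v j x ^ 2 ∂(Measure.pi μ) + ∫ x, DD μ u j x ^ 2 ∂(Measure.pi μ) := by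
      rw [← integral_const_mul, ← integral_add (hDv.sq.integrable _) (hDu.sq.integrable _)]
      refine integral_mono (((hDv.mul hDu).const_mul 2).integrable _)
        ((hDv.sq.add hDu.sq).integrable _) fun x => ?_
      have := two_mul_le_add_sq (DD μ v j x) (DD μ u j x)
      simp only
      linarith
    simp only [← pow_two] at h2
    simp only [avgList, List.map_cons, List.sum_cons]
    linarith

lemma efron_stein (l : List (Fin n)) {u : (∀ i, Ω i) → ℝ} (hu : BddMeas u)
    (h0 : ∀ x, avgList μ l u x = 0) :
    ∫ x, u x ^ 2 ∂(Measure.pi μ) ≤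
      (l.map fun j => ∫ x, DD μ u j x ^ 2 ∂(Measure.pi μ)).sum := by
  have h := efron_stein_aux μ l hu hu
  simp only [h0, ← pow_two] at h
  simp only [mul_zero, integral_zero, ne_eq, OfNat.ofNat_ne_zero, not_false_eq_true,
    zero_pow, sub_zero] at h
  linarith

lemma dd_sq (F : (∀ i, Ω i) → ℝ) (i : Fin n) (x : ∀ i, Ω i) :
    dd μ F i x ^ 2 = (1 / 2) * ∫ y, (F x - F (Function.update x i y)) ^ 2 ∂(μ i) :=
  Real.sq_sqrt (mul_nonneg (by norm_num) (integral_nonneg fun _ => sq_nonneg _))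

lemma ddNorm_sq (F : (∀ i, Ω i) → ℝ) (x : ∀ i, Ω i) :
    ddNorm μ F x ^ 2 = ∑ i, dd μ F i x ^ 2 :=
  Real.sq_sqrt (Finset.sum_nonneg fun _ _ => sq_nonneg _)

lemma ddNorm_const_mul_sq (c : ℝ) (F : (∀ i, Ω i) → ℝ) (x : ∀ i, Ω i) :
    ddNorm μ (fun x => c * F x) x ^ 2 = c ^ 2 * ddNorm μ F x ^ 2 := by
  rw [ddNorm_sq, ddNorm_sq, Finset.mul_sum]
  refine Finset.sum_congr rfl fun i _ => ?_
  rw [dd_sq, dd_sq, mul_left_comm, ← integral_const_mul (c ^ 2)]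
  congr 2; funext y; ring

lemma dd_sq_eq {F : (∀ i, Ω i) → ℝ} (hF : BddMeas F) (i : Fin n) (x : ∀ i, Ω i) :
    dd μ F i x ^ 2
      = (1 / 2) * (F x ^ 2 - 2 * (F x * avg μ i F x) + avg μ i (fun x => F x ^ 2) x) := by
  have hu : BddMeas fun y => F (Function.update x i y) := hF.comp (measurable_update x)
  have e : (fun y => (F x - F (Function.update x i y)) ^ 2) = fun y =>
      F x ^ 2 - (2 * F x) * F (Function.update x i y) + F (Function.update x i y) ^ 2 := by
    funext y; ring
  rw [dd_sq, e, integral_add (((BddMeas.const _).sub (hu.const_mul _)).integrable _)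
    (hu.sq.integrable _), integral_sub (integrable_const _) ((hu.const_mul _).integrable _),
    integral_const_mul]
  simp [avg]
  ring

lemma BddMeas.dd_sq {F : (∀ i, Ω i) → ℝ} (hF : BddMeas F) (i : Fin n) :
    BddMeas fun x => dd μ F i x ^ 2 := by
  simp only [dd_sq_eq μ hF]
  exact ((hF.sq.sub ((hF.mul (hF.avg μ i)).const_mul 2)).add (hF.sq.avg μ i)).const_mul _

lemma BddMeas.ddNorm {F : (∀ i, Ω i) → ℝ} (hF : BddMeas F) : BddMeas (ddNorm μ F) :=
  (BddMeas.sum Finset.univ fun i => hF.dd_sq μ i).sqrt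

lemma integral_dd_sq {F : (∀ i, Ω i) → ℝ} (hF : BddMeas F) (i : Fin n) :
    ∫ x, dd μ F i x ^ 2 ∂(Measure.pi μ) = ∫ x, DD μ F i x ^ 2 ∂(Measure.pi μ) := by
  have h2 := integral_DD_mul_DD μ hF hF i
  simp only [← pow_two] at h2
  simp only [dd_sq_eq μ hF]
  rw [integral_const_mul, integral_add
      ((hF.sq.sub ((hF.mul (hF.avg μ i)).const_mul 2)).integrable _)
      ((hF.sq.avg μ i).integrable _),
    integral_sub (hF.sq.integrable _) (((hF.mul (hF.avg μ i)).const_mul 2).integrable _),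
    integral_const_mul, integral_avg μ hF.sq, h2]
  ring

section kernels

variable {μ} {h : Finset (Fin n) → (∀ i, Ω i) → ℝ}

lemma avg_kernel_sum (hker : IsHoeffdingKernels μ h)
    (𝒮 : Finset (Finset (Fin n))) (j : Fin n) :
    avg μ j (fun x => ∑ S ∈ 𝒮, h S x) = fun x => ∑ S ∈ 𝒮 with j ∉ S, h S x := by
  funext x
  simp only [avg]
  rw [integral_finsetSum _ fun S _ => hker.integrable S j x, Finset.sum_filter]
  refine Finset.sum_congr rfl fun S _ => ?_
  by_cases hj : j ∈ S
  · simp [hj, hker.degenerate S j hj x]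
  · have : ∀ y, h S (Function.update x j y) = h S x := fun y =>
      hker.localized S _ _ fun i hi => Function.update_of_ne (fun e : i = j => hj (e ▸ hi)) _ _
    simp [hj, this]

lemma avgList_kernel_sum (hker : IsHoeffdingKernels μ h)
    (l : List (Fin n)) (𝒮 : Finset (Finset (Fin n))) :
    avgList μ l (fun x => ∑ S ∈ 𝒮, h S x) = fun x => ∑ S ∈ 𝒮 with (∀ j ∈ l, j ∉ S), h S x := by
  induction l generalizing 𝒮 with
  | nil => simp [avgList]
  | cons j l ih =>
    rw [avgList, avg_kernel_sum hker, ih]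
    simp only [Finset.filter_filter, List.forall_mem_cons]

/-- Only the kernel of `{i}` survives averaging `𝔇ᵢ f` over all other coordinates, and it
vanishes by assumption. -/
lemma avgList_DD_eq_zero (hker : IsHoeffdingKernels μ h)
    {f : (∀ i, Ω i) → ℝ} (hsum : ∀ x, f x = ∑ S, h S x)
    (hlow : ∀ S : Finset (Fin n), S.card ≤ 1 → h S = 0) (i : Fin n) (x : ∀ i, Ω i) :
    avgList μ (Finset.univ.erase i).toList (DD μ f i) x = 0 := by
  have hf : f = fun x => ∑ S, h S x := funext hsum
  have hD : DD μ f i = fun x => ∑ S with i ∈ S, h S x := by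
    rw [DD_eq, hf, avg_kernel_sum hker]
    funext x
    simp only
    rw [← Finset.sum_filter_add_sum_filter_not Finset.univ (fun S => i ∈ S)]
    ring
  rw [hD, avgList_kernel_sum hker]
  refine Finset.sum_eq_zero fun S hS => ?_
  have hS' := (Finset.mem_filter.1 hS).2
  rw [hlow S, Pi.zero_apply]
  refine Finset.card_le_one.2 fun a ha b hb => ?_
  have : ∀ a ∈ S, a = i := by
    intro a ha
    by_contra hne
    exact hS' a (by simp [hne]) ha
  rw [this a ha, this b hb]

lemma avgList_univ_eq_zero (hker : IsHoeffdingKernels μ h)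
    {f : (∀ i, Ω i) → ℝ} (hsum : ∀ x, f x = ∑ S, h S x)
    (hlow : ∀ S : Finset (Fin n), S.card ≤ 1 → h S = 0) (x : ∀ i, Ω i) :
    avgList μ Finset.univ.toList f x = 0 := by
  have hf : f = fun x => ∑ S, h S x := funext hsum
  rw [hf, avgList_kernel_sum hker]
  refine Finset.sum_eq_zero fun S hS => ?_
  have hS' := (Finset.mem_filter.1 hS).2
  have : S = ∅ := Finset.eq_empty_of_forall_notMem fun a ha => hS' a (by simp) ha
  rw [hlow S (by simp [this]), Pi.zero_apply]

/-- Second order Poincaré inequality `∫ |𝔡f|² ≤ ∫ ‖𝔇⁽²⁾f‖²` in the absence of Hoeffding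
terms of order one: Efron–Stein is applied to each `𝔇ᵢ f` in the variables other than `i`. -/
lemma integral_ddNorm_sq_le (hker : IsHoeffdingKernels μ h)
    {f : (∀ i, Ω i) → ℝ} (hf : BddMeas f) (hsum : ∀ x, f x = ∑ S, h S x)
    (hlow : ∀ S : Finset (Fin n), S.card ≤ 1 → h S = 0) :
    ∫ x, ddNorm μ f x ^ 2 ∂(Measure.pi μ) ≤ ∫ x, D2HSsq μ f x ∂(Measure.pi μ) := by
  simp only [ddNorm_sq]
  rw [integral_finsetSum _ fun i _ => (hf.dd_sq μ i).integrable _]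
  have hb : ∀ i j, BddMeas fun x => if i = j then 0 else DD μ (DD μ f j) i x ^ 2 := by
    intro i j
    split_ifs
    · exact BddMeas.const 0
    · exact ((hf.DD μ j).DD μ i).sq
  simp only [D2HSsq]
  rw [integral_finsetSum _ fun i _ => (BddMeas.sum _ (hb i)).integrable _]
  simp only [integral_finsetSum _ fun j _ => (hb _ j).integrable _]
  rw [Finset.sum_comm]
  refine Finset.sum_le_sum fun i _ => ?_
  rw [integral_dd_sq μ hf]
  refine (efron_stein μ _ (hf.DD μ i) (avgList_DD_eq_zero hker hsum hlow i)).trans ?_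
  rw [Finset.sum_map_toList, ← Finset.add_sum_erase Finset.univ _ (Finset.mem_univ i)]
  simp only [if_true, integral_zero, zero_add]
  refine le_of_eq (Finset.sum_congr rfl fun j hj => ?_)
  simp [Finset.ne_of_mem_erase hj]

end kernels

/-! ### The modified logarithmic Sobolev inequality -/

lemma avg_ge {F : (∀ i, Ω i) → ℝ} (hF : BddMeas F) {ε : ℝ} (h : ∀ x, ε ≤ F x) (j : Fin n)
    (x : ∀ i, Ω i) : ε ≤ avg μ j F x := by
  have hu : BddMeas fun y => F (Function.update x j y) := hF.comp (measurable_update x)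
  have := integral_mono (μ := μ j) (integrable_const ε) (hu.integrable _) fun y => h _
  simpa [avg] using this

/-- One step of the tensorization of entropy: `log (G / E_j G)` is an admissible test
function for the dual form of the entropy in the `j`-th coordinate. -/
lemma entropy_step {g G : (∀ i, Ω i) → ℝ} (hg : BddMeas g) (hG : BddMeas G) {ε : ℝ}
    (hε : 0 < ε) (h : ∀ x, ε ≤ G x) (j : Fin n) :
    ∫ x, Real.exp (g x) * (Real.log (G x) - Real.log (avg μ j G x)) ∂(Measure.pi μ) ≤
      ∫ x, Real.exp (g x) * dd μ g j x ^ 2 ∂(Measure.pi μ) := by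
  have hG' := hG.avg μ j
  have hge := avg_ge μ hG h j
  have hL : BddMeas fun x => Real.log (G x) - Real.log (avg μ j G x) :=
    (hG.log hε h).sub (hG'.log hε hge)
  rw [← integral_avg μ (hg.exp.mul hL) j, ← integral_avg μ (hg.exp.mul (hg.dd_sq μ j)) j]
  refine integral_mono (((hg.exp.mul hL).avg μ j).integrable _)
    (((hg.exp.mul (hg.dd_sq μ j)).avg μ j).integrable _) fun x => ?_
  have hupd := measurable_update (X := Ω) x (a := j)
  have hpos : 0 < avg μ j G x := hε.trans_le (hge x)
  have h1 : ∫ y, Real.exp (Real.log (G (Function.update x j y))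
      - Real.log (avg μ j G (Function.update x j y))) ∂(μ j) = 1 := by
    have : ∀ y, Real.exp (Real.log (G (Function.update x j y))
        - Real.log (avg μ j G (Function.update x j y)))
        = G (Function.update x j y) / avg μ j G x := by
      intro y
      rw [avg_update, Real.exp_sub, Real.exp_log hpos, Real.exp_log (hε.trans_le (h _))]
    simp only [this, integral_div]
    exact div_self hpos.ne'
  have := one_factor (μ j) (hg.comp hupd) (hL.comp hupd) h1
  refine this.trans (le_of_eq ?_)
  simp only [avg, dd_sq, Function.update_idem]

lemma entropy_list (l : List (Fin n)) {g G : (∀ i, Ω i) → ℝ} (hg : BddMeas g) (hG : BddMeas G)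
    {ε : ℝ} (hε : 0 < ε) (h : ∀ x, ε ≤ G x) :
    ∫ x, Real.exp (g x) * (Real.log (G x) - Real.log (avgList μ l G x)) ∂(Measure.pi μ) ≤
      (l.map fun j => ∫ x, Real.exp (g x) * dd μ g j x ^ 2 ∂(Measure.pi μ)).sum := by
  have hlist : ∀ (l : List (Fin n)) (G : (∀ i, Ω i) → ℝ), BddMeas G → (∀ x, ε ≤ G x) →
      ∀ x, ε ≤ avgList μ l G x := by
    intro l
    induction l with
    | nil => intro G _ h; exact h
    | cons j l ih => intro G hG h; exact ih _ (hG.avg μ j) (avg_ge μ hG h j)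
  induction l generalizing G with
  | nil => simp [avgList]
  | cons j l ih =>
    have h1 := entropy_step μ hg hG hε h j
    have h2 := ih (hG.avg μ j) (avg_ge μ hG h j)
    have hL0 := hG.log hε h
    have hL1 := (hG.avg μ j).log hε (avg_ge μ hG h j)
    have hL2 := ((hG.avg μ j).avgList μ l).log hε (hlist l _ (hG.avg μ j) (avg_ge μ hG h j))
    simp only [avgList, List.map_cons, List.sum_cons]
    refine le_trans (le_of_eq ?_) (add_le_add h1 h2)
    rw [← integral_add ((hg.exp.mul (hL0.sub hL1)).integrable _)
      ((hg.exp.mul (hL1.sub hL2)).integrable _)]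
    congr 1; funext x; ring

/-- Modified logarithmic Sobolev inequality `Ent(exp g) ≤ ∫ |𝔡g|² exp g`, valid for every
product probability measure. -/
lemma modified_lsi {g : (∀ i, Ω i) → ℝ} (hg : BddMeas g) :
    ∫ x, Real.exp (g x) * g x ∂(Measure.pi μ) - (∫ x, Real.exp (g x) ∂(Measure.pi μ))
        * Real.log (∫ x, Real.exp (g x) ∂(Measure.pi μ)) ≤
      ∫ x, Real.exp (g x) * ddNorm μ g x ^ 2 ∂(Measure.pi μ) := by
  obtain ⟨C, hC⟩ := hg.2
  have h := entropy_list μ Finset.univ.toList hg hg.exp (Real.exp_pos (-C))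
    fun x => Real.exp_le_exp.2 (neg_le_of_abs_le (hC x))
  simp only [avgList_univ μ hg.exp, Real.log_exp, mul_sub] at h
  rw [integral_sub ((hg.exp.mul hg).integrable _)
    ((hg.exp.mul (BddMeas.const _)).integrable _), integral_mul_const,
    Finset.sum_map_toList, ← integral_finsetSum _
      fun i _ => (hg.exp.mul (hg.dd_sq μ i)).integrable _] at h
  simpa only [ddNorm_sq, Finset.mul_sum] using h

/-- The modified logarithmic Sobolev inequality along the ray `u F`. -/
lemma modified_lsi_mul {F : (∀ i, Ω i) → ℝ} (hF : BddMeas F) (u : ℝ) :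
    ∫ x, Real.exp (u * F x) * (u * F x) ∂(Measure.pi μ)
        - (∫ x, Real.exp (u * F x) ∂(Measure.pi μ))
          * Real.log (∫ x, Real.exp (u * F x) ∂(Measure.pi μ)) ≤
      u ^ 2 * ∫ x, Real.exp (u * F x) * ddNorm μ F x ^ 2 ∂(Measure.pi μ) := by
  refine (modified_lsi μ (hF.const_mul u)).trans (le_of_eq ?_)
  rw [← integral_const_mul]
  congr 1; funext x
  rw [ddNorm_const_mul_sq]; ring

/-! ### Exponential integrability -/

/-- Functions with `|𝔡g| ≤ 1` are sub-Gaussian. -/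
lemma subgaussian {g : (∀ i, Ω i) → ℝ} (hg : BddMeas g) (h1 : ∀ x, ddNorm μ g x ≤ 1) (w : ℝ) :
    ∫ x, Real.exp (w * g x) ∂(Measure.pi μ)
      ≤ Real.exp (w * ∫ x, g x ∂(Measure.pi μ) + w ^ 2) := by
  have key : ∀ g : (∀ i, Ω i) → ℝ, BddMeas g → (∀ x, ddNorm μ g x ^ 2 ≤ 1) → ∀ s, 0 < s →
      ∫ x, Real.exp (s * g x) ∂(Measure.pi μ)
        ≤ Real.exp (s * ∫ x, g x ∂(Measure.pi μ) + s ^ 2) := by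
    intro g hg h1 s hs
    have := herbst (Measure.pi μ) hg (c := 1) hs fun u _ _ => by
      refine (modified_lsi_mul μ hg u).trans ?_
      rw [one_mul]
      refine mul_le_mul_of_nonneg_left ?_ (sq_nonneg u)
      refine integral_mono (((hg.const_mul u).exp.mul (hg.ddNorm μ).sq).integrable _)
        ((hg.const_mul u).exp.integrable _) fun x => ?_
      exact mul_le_of_le_one_right (Real.exp_pos _).le (h1 x)
    simpa using this
  have h1' : ∀ x, ddNorm μ g x ^ 2 ≤ 1 := fun x =>
    pow_le_one₀ (Real.sqrt_nonneg _) (h1 x)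
  rcases lt_trichotomy w 0 with hw | hw | hw
  · have := key (fun x => (-1) * g x) (hg.const_mul (-1))
      (fun x => by rw [ddNorm_const_mul_sq]; simpa using h1' x) (-w) (by linarith)
    rw [integral_const_mul] at this
    convert this using 3 <;> ring_nf
  · simp [hw]
  · exact key g hg h1' w hw

/-- For mean zero `F`, exponential moments of `F` are controlled by those of `|𝔡F|²`. -/
lemma integral_exp_le_ddNorm {F : (∀ i, Ω i) → ℝ} (hF : BddMeas F)
    (h0 : ∫ x, F x ∂(Measure.pi μ) = 0) {s : ℝ} (hs : 0 < s) :
    ∫ x, Real.exp (s * F x) ∂(Measure.pi μ)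
      ≤ ∫ x, Real.exp (2 * s ^ 2 * ddNorm μ F x ^ 2) ∂(Measure.pi μ) := by
  have hΓ := (hF.ddNorm μ).sq
  have hN := integral_exp_pos' (Measure.pi μ) (hΓ.const_mul (2 * s ^ 2))
  set L := Real.log (∫ x, Real.exp (2 * s ^ 2 * ddNorm μ F x ^ 2) ∂(Measure.pi μ)) with hL
  have := herbst (Measure.pi μ) hF (c := L / s ^ 2) hs fun u hu hus => by
    have hlsi := modified_lsi_mul μ hF u
    have hM := integral_exp_pos' (Measure.pi μ) (hF.const_mul u)
    -- Gibbs' principle with the test function `2u²|𝔡F|²` absorbs half of the entropy.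
    set W : (∀ i, Ω i) → ℝ := fun x => 2 * u ^ 2 * ddNorm μ F x ^ 2 with hW
    have hWb : BddMeas W := hΓ.const_mul _
    have hNu := integral_exp_pos' (Measure.pi μ) hWb
    set Lu := Real.log (∫ x, Real.exp (W x) ∂(Measure.pi μ)) with hLu
    have hg := gibbs (Measure.pi μ) (hF.const_mul u) (hWb.sub (BddMeas.const Lu)) (by
      simp only [Real.exp_sub, integral_div, hLu, Real.exp_log hNu]
      exact div_self hNu.ne')
    simp only [mul_sub] at hg
    rw [integral_sub (((hF.const_mul u).exp.mul hWb).integrable _)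
      (((hF.const_mul u).exp.mul (BddMeas.const _)).integrable _), integral_mul_const] at hg
    have eW : ∫ x, Real.exp (u * F x) * W x ∂(Measure.pi μ)
        = 2 * (u ^ 2 * ∫ x, Real.exp (u * F x) * ddNorm μ F x ^ 2 ∂(Measure.pi μ)) := by
      rw [← mul_assoc, ← integral_const_mul]
      congr 1; funext x; simp only [hW]; ring
    rw [eW] at hg
    have hLle : Lu ≤ L / s ^ 2 * u ^ 2 := by
      have hp1 : u ^ 2 / s ^ 2 ≤ 1 := by
        rw [div_le_one (by positivity)]
        exact pow_le_pow_left₀ hu.le hus 2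
      have hJ := integral_exp_mul_le (Measure.pi μ) (hΓ.const_mul (2 * s ^ 2))
        (p := u ^ 2 / s ^ 2) (by positivity) hp1
      have e : (fun x => Real.exp (u ^ 2 / s ^ 2 * (2 * s ^ 2 * ddNorm μ F x ^ 2)))
          = fun x => Real.exp (W x) := by
        funext x; simp only [hW]; congr 1; field_simp
      rw [e, ← Real.log_le_iff_le_exp hNu] at hJ
      refine hJ.trans (le_of_eq ?_)
      ring
    have := mul_le_mul_of_nonneg_right hLle hM.le
    linarith
  rw [h0] at this
  have e : s * 0 + L / s ^ 2 * s ^ 2 = L := by field_simp; ring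
  rwa [e, hL, Real.exp_log hN] at this

end product

/-- Second order concentration (Theorem 1.2): if the Hoeffding decomposition of the
bounded measurable function `f` has no terms of order `0` and `1`, `|𝔡|𝔡f|| ≤ 1`,
and `∫ ‖𝔇⁽²⁾f‖²_HS dμ ≤ b²`, then `∫ exp(|f|/(2(3+b²))) dμ ≤ 2`. -/
theorem second_order_concentration
    (μ : ∀ i, Measure (Ω i)) [∀ i, IsProbabilityMeasure (μ i)]
    (f : (∀ i, Ω i) → ℝ) (hmeas : Measurable f) (hbdd : ∃ C, ∀ x, |f x| ≤ C)
    (h : Finset (Fin n) → (∀ i, Ω i) → ℝ) (hker : IsHoeffdingKernels μ h)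
    (hsum : ∀ x, f x = ∑ S : Finset (Fin n), h S x)
    (hlow : ∀ S : Finset (Fin n), S.card ≤ 1 → h S = 0)
    (hgrad : ∀ x, ddNorm μ (fun y => ddNorm μ f y) x ≤ 1)
    (b : ℝ) (hb : 0 ≤ b)
    (hHS : ∫ x, D2HSsq μ f x ∂(Measure.pi μ) ≤ b ^ 2) :
    ∫ x, Real.exp (|f x| / (2 * (3 + b ^ 2))) ∂(Measure.pi μ) ≤ 2 := by
  have hf : BddMeas f := ⟨hmeas, hbdd⟩
  have hmean : ∫ x, f x ∂(Measure.pi μ) = 0 := by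
    rw [← integral_avgList μ Finset.univ.toList hf]
    simp [avgList_univ_eq_zero hker hsum hlow]
  set g : (∀ i, Ω i) → ℝ := ddNorm μ f with hgdef
  have hg : BddMeas g := hf.ddNorm μ
  set m := ∫ x, g x ∂(Measure.pi μ) with hm
  have hg2 : ∫ x, g x ^ 2 ∂(Measure.pi μ) ≤ b ^ 2 :=
    (integral_ddNorm_sq_le hker hf hsum hlow).trans hHS
  have hmb : m ^ 2 ≤ b ^ 2 := by
    refine le_trans ?_ hg2
    have h0 : 0 ≤ ∫ x, (g x - m) ^ 2 ∂(Measure.pi μ) := integral_nonneg fun _ => sq_nonneg _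
    have e : (fun x => (g x - m) ^ 2) = fun x => g x ^ 2 - (2 * m * g x - m ^ 2) := by
      funext x; ring
    rw [e, integral_sub (hg.sq.integrable _)
      (((hg.const_mul _).sub (BddMeas.const _)).integrable _),
      integral_sub ((hg.const_mul _).integrable _) (integrable_const _), integral_const_mul,
      ← hm] at h0
    simp at h0
    linarith
  have hK : ∫ x, Real.exp (g x ^ 2 / 8) ∂(Measure.pi μ)
      ≤ Real.sqrt 2 * Real.exp (b ^ 2 / 4) := by
    refine (integral_exp_sq_le (Measure.pi μ) hg (subgaussian μ hg hgrad)).trans ?_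
    gcongr
  -- The parameter `1/4` makes the Gaussian square moment above applicable: `2 (1/4)² = 1/8`.
  have hside : ∀ F : (∀ i, Ω i) → ℝ, BddMeas F → ∫ x, F x ∂(Measure.pi μ) = 0 →
      (∀ x, ddNorm μ F x ^ 2 = g x ^ 2) →
      ∫ x, Real.exp (1 / 4 * F x) ∂(Measure.pi μ) ≤ Real.sqrt 2 * Real.exp (b ^ 2 / 4) := by
    intro F hF h0 hFg
    refine (integral_exp_le_ddNorm μ hF h0 (by norm_num : (0 : ℝ) < 1 / 4)).trans ?_
    refine le_trans (le_of_eq ?_) hK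
    congr 1; funext x; rw [hFg]; ring_nf
  have hplus := hside f hf hmean fun _ => rfl
  have hminus := hside (fun x => (-1) * f x) (hf.const_mul _)
    (by rw [integral_const_mul, hmean, mul_zero])
    fun x => by rw [ddNorm_const_mul_sq]; simp [hgdef]
  have habs : ∫ x, Real.exp (1 / 4 * |f x|) ∂(Measure.pi μ)
      ≤ 2 * (Real.sqrt 2 * Real.exp (b ^ 2 / 4)) := by
    have h1 := (hf.const_mul (1 / 4)).exp
    have h2 := ((hf.const_mul (-1)).const_mul (1 / 4)).exp
    have := integral_mono ((hf.abs.const_mul (1 / 4)).exp.integrable (Measure.pi μ))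
      ((h1.add h2).integrable _) fun x => by
        rcases abs_cases (f x) with ⟨h, _⟩ | ⟨h, _⟩
        · simp only [h]
          exact le_add_of_nonneg_right (Real.exp_pos _).le
        · simp only [h, neg_one_mul]
          exact le_add_of_nonneg_left (Real.exp_pos _).le
    rw [integral_add (h1.integrable _) (h2.integrable _)] at this
    linarith
  have hpos := integral_exp_pos' (Measure.pi μ) (hf.abs.const_mul (1 / 4))
  have hlog : Real.log (∫ x, Real.exp (1 / 4 * |f x|) ∂(Measure.pi μ))
      ≤ 3 / 2 * Real.log 2 + b ^ 2 / 4 := by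
    refine (Real.log_le_log hpos habs).trans (le_of_eq ?_)
    rw [Real.log_mul (by norm_num) (by positivity), Real.log_mul (by positivity) (by positivity),
      Real.log_exp, Real.log_sqrt (by norm_num)]
    ring
  have hB : 0 < 3 + b ^ 2 := by positivity
  have hJ := integral_exp_mul_le (Measure.pi μ) (hf.abs.const_mul (1 / 4))
    (p := 2 / (3 + b ^ 2)) (by positivity)
    (by rw [div_le_one hB]; nlinarith [sq_nonneg b])
  have e : (fun x => Real.exp (|f x| / (2 * (3 + b ^ 2))))
      = fun x => Real.exp (2 / (3 + b ^ 2) * (1 / 4 * |f x|)) := by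
    funext x; congr 1; field_simp; norm_num
  rw [e]
  refine hJ.trans ?_
  rw [← Real.le_log_iff_exp_le (by norm_num), div_mul_eq_mul_div, div_le_iff₀ hB]
  -- The exponent is at most `(3 log 2 + b²/2) / (3 + b²)`, and `1/2 < log 2`.
  nlinarith [Real.log_two_gt_d9, sq_nonneg b]
end

section
/- Let μ = ⊗_{i=1}^n μ_i where each μ_i = p_i δ_{a_i} + (1−p_i) δ_{b_i} is a two-point (Bernoulli) measure on ℝ with a_i, b_i ∈ ℝ and p_i ∈ (0,1). Let f be a bounded measurable function whose Hoeffding decomposition is f = Σ_{k=2}^n f_k, satisfying |𝔡|𝔡f|| ≤ 1 pointwise and ∫ ‖𝔇^{(2)} f‖_{HS}² dμ ≤ b² for some b ≥ 0. Then ∫ exp(|f| / (3 + 2b²)) dμ ≤ 2. -/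
/-!
Since each `μ i` is carried by two points, all integrals are finite weighted sums over the cube
`Fin n → Bool`, and the argument takes place there. Write `E` for the expectation, `Ent` for the
entropy and `Γ = |𝔡f|`.

* Tensorization of entropy together with `Ent(F) ≤ Cov(F, log F)` in each coordinate
  (`ent_tensor`) and convexity of `exp` gives the modified logarithmic Sobolev inequality
  `Ent(e^g) ≤ E[|𝔡g|² e^g]`. The same argument, with a two-point inequality replacing the chain
  rule, gives `Ent(e^{tΓ²}) ≤ 4t² E[Γ² e^{tΓ²}]` when `|𝔡Γ| ≤ 1` (`ent_exp_le`).
* The second inequality integrates to `log E e^{tΓ²} ≤ t E Γ² / (1 - 4t)` (`log_Ex_exp_sq_le`).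
* Orthogonality of the Hoeffding terms, all of order at least two, gives
  `E Γ² ≤ E ‖𝔇⁽²⁾f‖² ≤ b²` (`Ex_gradSq_le`) and `E f = 0`.
* The variational formula of entropy bounds `(t/2) E[Γ² e^{tf}]` by
  `Ent(e^{tf}) + E e^{tf} log E e^{tΓ²/2}`, so that `M(t) = E e^{tf}` satisfies
  `d/dt (log M(t) / t) ≤ b² / (1 - 2t)²`. Integrating up to `t = 1/3` yields `M(1/3) ≤ e^{b²/3}`
  (`Ex_exp_third_le`), and the same holds for `-f`.
* Hence `E e^{|f|/3} ≤ 2 e^{b²/3}`, and Jensen's inequality for the power `3 / (3 + 2b²)`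
  gives the bound `2`, because `1 ≤ 2 log 2` (`Ex_exp_rescale`).
-/

open MeasureTheory

variable {n : ℕ} {Ω : Fin n → Type*} [∀ i, MeasurableSpace (Ω i)]

/-! ### Finite product spaces and tensorization of entropy -/

/-- Product weight of a point of a finite product space. -/
noncomputable def wt {n : ℕ} {α : Type*} (w : Fin n → α → ℝ) (x : Fin n → α) : ℝ :=
  ∏ i, w i (x i)

/-- Expectation with respect to the product of the weights `w i`. -/
noncomputable def Ex {n : ℕ} {α : Type*} [Fintype α] (w : Fin n → α → ℝ)
    (F : (Fin n → α) → ℝ) : ℝ :=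
  ∑ x, wt w x * F x

/-- Average over the `i`-th coordinate. -/
noncomputable def Av {n : ℕ} {α : Type*} [Fintype α] (w : Fin n → α → ℝ) (i : Fin n)
    (F : (Fin n → α) → ℝ) (x : Fin n → α) : ℝ :=
  ∑ b, w i b * F (Function.update x i b)

/-- The discrete form of `|𝔡g|²`. -/
noncomputable def gradSq {n : ℕ} {α : Type*} [Fintype α] (w : Fin n → α → ℝ)
    (g : (Fin n → α) → ℝ) (x : Fin n → α) : ℝ :=
  ∑ i, (1 / 2) * ∑ b, w i b * (g x - g (Function.update x i b)) ^ 2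

/-- The log-sum inequality. -/
lemma log_sum_le {ι : Type*} [Fintype ι] (W u v : ι → ℝ) (hW : ∀ i, 0 ≤ W i)
    (hu : ∀ i, 0 < u i) (hv : ∀ i, 0 < v i) (h1 : ∑ i, W i = 1) :
    (∑ i, W i * u i) * (Real.log (∑ i, W i * u i) - Real.log (∑ i, W i * v i))
      ≤ ∑ i, W i * (u i * (Real.log (u i) - Real.log (v i))) := by
  have pos : ∀ z : ι → ℝ, (∀ i, 0 < z i) → 0 < ∑ i, W i * z i := by
    intro z hz
    obtain ⟨i, hi⟩ : ∃ i, 0 < W i := by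
      by_contra! hc
      have : ∑ i, W i ≤ 0 := Finset.sum_nonpos fun i _ => hc i
      linarith
    exact Finset.sum_pos' (fun j _ => mul_nonneg (hW j) (hz j).le)
      ⟨i, Finset.mem_univ i, mul_pos hi (hz i)⟩
  set U := ∑ i, W i * u i with hU
  set V := ∑ i, W i * v i with hV
  have hU0 : 0 < U := pos u hu
  have hV0 : 0 < V := pos v hv
  have key : ∀ i, W i * (u i - v i * (U / V)) ≤
      W i * (u i * (Real.log (u i) - Real.log (v i))) - W i * u i * (Real.log U - Real.log V) := by
    intro i
    have h := Real.log_le_sub_one_of_pos (x := v i * U / (u i * V)) (by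
      have := hu i; have := hv i; positivity)
    rw [Real.log_div (by have := hv i; positivity) (by have := hu i; positivity),
      Real.log_mul (hv i).ne' hU0.ne', Real.log_mul (hu i).ne' hV0.ne'] at h
    have h2 := mul_le_mul_of_nonneg_left h (mul_nonneg (hW i) (hu i).le)
    have e : W i * u i * (v i * U / (u i * V) - 1) = - (W i * (u i - v i * (U / V))) := by
      have := (hu i).ne'
      field_simp
      ring
    rw [e] at h2
    linarith
  have hs := Finset.sum_le_sum fun i (_ : i ∈ Finset.univ) => key i
  rw [Finset.sum_sub_distrib, ← Finset.sum_mul, ← hU] at hs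
  have e2 : ∑ i, W i * (u i - v i * (U / V)) = 0 := by
    have : ∀ i, W i * (u i - v i * (U / V)) = W i * u i - W i * v i * (U / V) := fun i => by ring
    simp_rw [this]
    rw [Finset.sum_sub_distrib, ← Finset.sum_mul, ← hU, ← hV]
    field_simp
    ring
  linarith

section Cube

variable {n : ℕ} {α : Type*} [Fintype α]

omit [Fintype α] in
lemma wt_nonneg (w : Fin n → α → ℝ) (hw : ∀ i b, 0 ≤ w i b) (x : Fin n → α) : 0 ≤ wt w x :=
  Finset.prod_nonneg fun i _ => hw i (x i)

lemma sum_wt (w : Fin n → α → ℝ) (h1 : ∀ i, ∑ b, w i b = 1) : ∑ x, wt w x = 1 := by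
  classical
  unfold wt
  rw [← Fintype.prod_sum]
  simp [h1]

lemma Ex_mono (w : Fin n → α → ℝ) (hw : ∀ i b, 0 ≤ w i b) {F G : (Fin n → α) → ℝ}
    (h : ∀ x, F x ≤ G x) : Ex w F ≤ Ex w G :=
  Finset.sum_le_sum fun x _ => mul_le_mul_of_nonneg_left (h x) (wt_nonneg w hw x)

lemma Ex_const_mul (w : Fin n → α → ℝ) (c : ℝ) (F : (Fin n → α) → ℝ) :
    Ex w (fun x => c * F x) = c * Ex w F := by
  unfold Ex
  rw [Finset.mul_sum]
  exact Finset.sum_congr rfl fun x _ => by ring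

lemma Ex_add (w : Fin n → α → ℝ) (F G : (Fin n → α) → ℝ) :
    Ex w (fun x => F x + G x) = Ex w F + Ex w G := by
  unfold Ex
  rw [← Finset.sum_add_distrib]
  exact Finset.sum_congr rfl fun x _ => by ring

lemma Ex_sub (w : Fin n → α → ℝ) (F G : (Fin n → α) → ℝ) :
    Ex w (fun x => F x - G x) = Ex w F - Ex w G := by
  unfold Ex
  rw [← Finset.sum_sub_distrib]
  exact Finset.sum_congr rfl fun x _ => by ring

lemma Ex_sum {κ : Type*} (s : Finset κ) (w : Fin n → α → ℝ) (F : κ → (Fin n → α) → ℝ) :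
    Ex w (fun x => ∑ k ∈ s, F k x) = ∑ k ∈ s, Ex w (F k) := by
  unfold Ex
  rw [Finset.sum_comm]
  exact Finset.sum_congr rfl fun x _ => by rw [Finset.mul_sum]

lemma Ex_pos (w : Fin n → α → ℝ) (hw : ∀ i b, 0 ≤ w i b) (h1 : ∀ i, ∑ b, w i b = 1)
    {F : (Fin n → α) → ℝ} (hF : ∀ x, 0 < F x) : 0 < Ex w F := by
  obtain ⟨x, hx⟩ : ∃ x, 0 < wt w x := by
    by_contra! hc
    have : ∑ x, wt w x ≤ 0 := Finset.sum_nonpos fun i _ => hc i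
    linarith [sum_wt w h1]
  exact Finset.sum_pos' (fun j _ => mul_nonneg (wt_nonneg w hw j) (hF j).le)
    ⟨x, Finset.mem_univ x, mul_pos hx (hF x)⟩

omit [Fintype α] in
lemma wt_update (w : Fin n → α → ℝ) (i : Fin n) (x : Fin n → α) (b : α) :
    wt w (Function.update x i b) * w i (x i) = wt w x * w i b := by
  classical
  unfold wt
  rw [← Finset.mul_prod_erase _ _ (Finset.mem_univ i),
    ← Finset.mul_prod_erase _ (fun j => w j (x j)) (Finset.mem_univ i)]
  have : ∏ j ∈ Finset.univ.erase i, w j (Function.update x i b j)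
      = ∏ j ∈ Finset.univ.erase i, w j (x j) :=
    Finset.prod_congr rfl fun j hj => by
      rw [Function.update_of_ne (Finset.ne_of_mem_erase hj)]
  rw [this, Function.update_self]
  ring

/-- Exchangeability: a point and the point with its `i`-th coordinate resampled
form an exchangeable pair. -/
lemma Ex_swap (w : Fin n → α → ℝ) (i : Fin n) (Φ : (Fin n → α) → (Fin n → α) → ℝ) :
    Ex w (fun x => ∑ b, w i b * Φ x (Function.update x i b))
      = Ex w (fun x => ∑ b, w i b * Φ (Function.update x i b) x) := by
  unfold Ex
  simp_rw [Finset.mul_sum]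
  rw [← Fintype.sum_prod_type', ← Fintype.sum_prod_type']
  refine Fintype.sum_equiv
    { toFun := fun z : (Fin n → α) × α => (Function.update z.1 i z.2, z.1 i)
      invFun := fun z : (Fin n → α) × α => (Function.update z.1 i z.2, z.1 i)
      left_inv := fun z => by simp
      right_inv := fun z => by simp } _ _ ?_
  rintro ⟨x, b⟩
  simp only [Equiv.coe_fn_mk, Function.update_idem, Function.update_eq_self]
  rw [← mul_assoc, ← mul_assoc, wt_update]

lemma Ex_Av (w : Fin n → α → ℝ) (h1 : ∀ i, ∑ b, w i b = 1) (i : Fin n)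
    (F : (Fin n → α) → ℝ) : Ex w (Av w i F) = Ex w F := by
  have := Ex_swap w i (fun _ y => F y)
  rw [show Av w i F = fun x => ∑ b, w i b * F (Function.update x i b) from rfl, this]
  congr 1
  funext x
  rw [← Finset.sum_mul, h1, one_mul]

lemma Ex_cons (w : Fin (n + 1) → α → ℝ) (F : (Fin (n + 1) → α) → ℝ) :
    Ex w F = ∑ a, w 0 a * Ex (fun i => w i.succ) (fun y => F (Fin.cons a y)) := by
  unfold Ex wt
  simp_rw [Finset.mul_sum]
  rw [← Fintype.sum_prod_type',
    ← Fintype.sum_equiv (Fin.consEquiv (fun _ : Fin (n + 1) => α)) _ _ (fun _ => rfl)]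
  refine Finset.sum_congr rfl fun z _ => ?_
  simp [Fin.consEquiv, Fin.prod_univ_succ, mul_assoc]

/-- Joint convexity of `(u, v) ↦ (u - v) (log u - log v)`, in the form of Jensen's inequality. -/
lemma sym_log_sum_le {ι : Type*} [Fintype ι] (W u v : ι → ℝ) (hW : ∀ i, 0 ≤ W i)
    (hu : ∀ i, 0 < u i) (hv : ∀ i, 0 < v i) (h1 : ∑ i, W i = 1) :
    (∑ i, W i * u i - ∑ i, W i * v i) *
        (Real.log (∑ i, W i * u i) - Real.log (∑ i, W i * v i))
      ≤ ∑ i, W i * ((u i - v i) * (Real.log (u i) - Real.log (v i))) := by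
  have h := log_sum_le W u v hW hu hv h1
  have h' := log_sum_le W v u hW hv hu h1
  have e : ∑ i, W i * ((u i - v i) * (Real.log (u i) - Real.log (v i)))
      = ∑ i, W i * (u i * (Real.log (u i) - Real.log (v i)))
        + ∑ i, W i * (v i * (Real.log (v i) - Real.log (u i))) := by
    rw [← Finset.sum_add_distrib]
    exact Finset.sum_congr rfl fun i _ => by ring
  rw [e]
  linarith

/-- One-dimensional bound of the entropy by the covariance of `m` and `log m`. -/
lemma ent_le_cov (w m : α → ℝ) (hw : ∀ b, 0 ≤ w b) (h1 : ∑ b, w b = 1) (hm : ∀ b, 0 < m b) :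
    ∑ a, w a * (m a * Real.log (m a)) - (∑ a, w a * m a) * Real.log (∑ a, w a * m a)
      ≤ ∑ a, w a * ((1 / 2) * ∑ b, w b * ((m a - m b) * (Real.log (m a) - Real.log (m b)))) := by
  have hj := log_sum_le w (fun _ => 1) m hw (fun _ => one_pos) hm h1
  simp only [mul_one, h1, Real.log_one, zero_sub, one_mul, mul_neg, Finset.sum_neg_distrib] at hj
  have hpos : 0 ≤ ∑ a, w a * m a := Finset.sum_nonneg fun a _ => mul_nonneg (hw a) (hm a).le
  have e : ∑ a, w a * ((1 / 2) * ∑ b, w b * ((m a - m b) * (Real.log (m a) - Real.log (m b))))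
      = ∑ a, w a * (m a * Real.log (m a)) - (∑ a, w a * m a) * ∑ a, w a * Real.log (m a) := by
    have inner : ∀ a, ∑ b, w b * ((m a - m b) * (Real.log (m a) - Real.log (m b)))
        = m a * Real.log (m a) - m a * (∑ b, w b * Real.log (m b))
          - Real.log (m a) * (∑ b, w b * m b) + ∑ b, w b * (m b * Real.log (m b)) := by
      intro a
      have : ∀ b, w b * ((m a - m b) * (Real.log (m a) - Real.log (m b)))
          = w b * (m a * Real.log (m a)) - m a * (w b * Real.log (m b))
            - Real.log (m a) * (w b * m b) + w b * (m b * Real.log (m b)) := fun b => by ring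
      simp_rw [this]
      rw [Finset.sum_add_distrib, Finset.sum_sub_distrib, Finset.sum_sub_distrib,
        ← Finset.mul_sum, ← Finset.mul_sum, ← Finset.sum_mul, h1, one_mul]
    simp_rw [inner]
    generalize hL : ∑ b, w b * Real.log (m b) = L
    generalize hU : ∑ b, w b * m b = U
    generalize hQ : ∑ b, w b * (m b * Real.log (m b)) = Q
    have : ∀ a, w a * ((1 / 2) * (m a * Real.log (m a) - m a * L - Real.log (m a) * U + Q))
        = (1 / 2) * (w a * (m a * Real.log (m a))) - (L / 2) * (w a * m a)
          - (U / 2) * (w a * Real.log (m a)) + (Q / 2) * w a := fun a => by ring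
    simp_rw [this]
    rw [Finset.sum_add_distrib, Finset.sum_sub_distrib, Finset.sum_sub_distrib,
      ← Finset.mul_sum, ← Finset.mul_sum, ← Finset.mul_sum, ← Finset.mul_sum, h1, hL, hU, hQ]
    ring
  rw [e]
  nlinarith

/-- Tensorized entropy bound: the entropy is at most the sum of the expected coordinatewise
covariances of `F` and `log F`. -/
lemma ent_tensor : ∀ {n : ℕ} (w : Fin n → α → ℝ) (_ : ∀ i b, 0 ≤ w i b)
    (_ : ∀ i, ∑ b, w i b = 1) (F : (Fin n → α) → ℝ) (_ : ∀ x, 0 < F x),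
    Ex w (fun x => F x * Real.log (F x)) - Ex w F * Real.log (Ex w F)
      ≤ ∑ i, Ex w (fun x => (1 / 2) * ∑ b, w i b *
        ((F x - F (Function.update x i b)) *
          (Real.log (F x) - Real.log (F (Function.update x i b))))) := by
  intro n
  induction n with
  | zero =>
    intro w _ _ F _
    simp [Ex, wt]
  | succ n ih =>
    intro w hw h1 F hF
    set w' : Fin n → α → ℝ := fun i => w i.succ with hw'
    set m : α → ℝ := fun a => Ex w' (fun y => F (Fin.cons a y)) with hm
    have hmpos : ∀ a, 0 < m a := fun a =>
      Ex_pos w' (fun i => hw i.succ) (fun i => h1 i.succ) (fun y => hF _)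
    have hih : ∀ a, _ := fun a => ih w' (fun i => hw i.succ) (fun i => h1 i.succ)
      (fun y => F (Fin.cons a y)) (fun y => hF _)
    have hcov := ent_le_cov (w 0) m (hw 0) (h1 0) hmpos
    have hconv : ∑ a, w 0 a * ((1 / 2) * ∑ b, w 0 b *
          ((m a - m b) * (Real.log (m a) - Real.log (m b))))
        ≤ Ex w (fun x => (1 / 2) * ∑ b, w 0 b *
        ((F x - F (Function.update x 0 b)) *
          (Real.log (F x) - Real.log (F (Function.update x 0 b))))) := by
      rw [Ex_cons]
      refine Finset.sum_le_sum fun a _ => mul_le_mul_of_nonneg_left ?_ (hw 0 a)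
      rw [Ex_const_mul, Ex_sum]
      refine mul_le_mul_of_nonneg_left ?_ (by norm_num)
      refine Finset.sum_le_sum fun b _ => ?_
      rw [Ex_const_mul]
      refine mul_le_mul_of_nonneg_left ?_ (hw 0 b)
      simp only [Fin.update_cons_zero]
      exact sym_log_sum_le (wt w') (fun y => F (Fin.cons a y)) (fun y => F (Fin.cons b y))
        (wt_nonneg w' fun i => hw i.succ) (fun y => hF _) (fun y => hF _)
        (sum_wt w' fun i => h1 i.succ)
    rw [Fin.sum_univ_succ]
    have hsum := Finset.sum_le_sum fun a (_ : a ∈ Finset.univ) =>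
      mul_le_mul_of_nonneg_left (hih a) (hw 0 a)
    have hE : Ex w F = ∑ a, w 0 a * m a := Ex_cons w F
    have hrest : ∑ i : Fin n, Ex w (fun x => (1 / 2) * ∑ b, w i.succ b *
        ((F x - F (Function.update x i.succ b)) *
          (Real.log (F x) - Real.log (F (Function.update x i.succ b)))))
        = ∑ a, w 0 a * ∑ i : Fin n, Ex w' (fun y => (1 / 2) * ∑ b, w' i b *
        ((F (Fin.cons a y) - F (Fin.cons a (Function.update y i b))) *
          (Real.log (F (Fin.cons a y)) - Real.log (F (Fin.cons a (Function.update y i b)))))) := by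
      simp_rw [Finset.mul_sum (s := Finset.univ (α := Fin n))]
      rw [Finset.sum_comm]
      refine Finset.sum_congr rfl fun i _ => ?_
      rw [Ex_cons]
      simp only [Fin.cons_update, hw']
    rw [hrest, hE, Ex_cons]
    have e1 : ∀ a, w 0 a * (Ex w' (fun x => F (Fin.cons a x) * Real.log (F (Fin.cons a x))) -
        Ex w' (fun y => F (Fin.cons a y)) * Real.log (Ex w' (fun y => F (Fin.cons a y))))
        = w 0 a * Ex w' (fun x => F (Fin.cons a x) * Real.log (F (Fin.cons a x)))
          - w 0 a * (m a * Real.log (m a)) := fun a => by rw [hm]; ring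
    simp_rw [e1] at hsum
    rw [Finset.sum_sub_distrib] at hsum
    linarith

end Cube

/-! ### Exponential moments from entropy bounds -/

section Concentration

variable {n : ℕ} {α : Type*} [Fintype α]

/-- The trapezoidal bound for the convex function `exp`. -/
lemma exp_trapezoid (u v : ℝ) :
    (Real.exp u - Real.exp v) * (u - v) ≤ (u - v) ^ 2 * ((Real.exp u + Real.exp v) / 2) := by
  have key : ∀ d : ℝ, 0 ≤ d → 2 * (Real.exp d - 1) ≤ d * (Real.exp d + 1) := by
    have hmono : Monotone fun d : ℝ => d * (Real.exp d + 1) - 2 * (Real.exp d - 1) := by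
      have hd : ∀ d : ℝ, HasDerivAt (fun d : ℝ => d * (Real.exp d + 1) - 2 * (Real.exp d - 1))
          (1 * (Real.exp d + 1) + d * Real.exp d - 2 * Real.exp d) d := fun d =>
        ((hasDerivAt_id d).mul ((Real.hasDerivAt_exp d).add_const 1)).sub
          (((Real.hasDerivAt_exp d).sub_const 1).const_mul 2)
      refine monotone_of_deriv_nonneg (fun d => (hd d).differentiableAt) fun d => ?_
      rw [(hd d).deriv]
      have h1 := Real.add_one_le_exp (-d)
      have h2 : Real.exp (-d) * Real.exp d = 1 := by rw [← Real.exp_add]; simp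
      nlinarith [Real.exp_pos d]
    intro d hd
    have := hmono hd
    simp at this
    linarith
  have main : ∀ u v : ℝ, v ≤ u →
      (Real.exp u - Real.exp v) * (u - v) ≤ (u - v) ^ 2 * ((Real.exp u + Real.exp v) / 2) := by
    intro u v h
    have hk := key (u - v) (by linarith)
    have e : Real.exp u = Real.exp (u - v) * Real.exp v := by rw [← Real.exp_add]; ring_nf
    rw [e]
    have := mul_le_mul_of_nonneg_left hk
      (mul_nonneg (Real.exp_pos v).le (sub_nonneg.2 h))
    nlinarith
  rcases le_total v u with h | h
  · exact main u v h
  · have := main v u h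
    nlinarith

/-- The version of `exp_trapezoid` for `exp (t u²)`; it replaces the chain rule for `u²`. -/
lemma exp_sq_trapezoid (t u v : ℝ) (ht : 0 ≤ t) :
    (Real.exp (t * u ^ 2) - Real.exp (t * v ^ 2)) * (t * u ^ 2 - t * v ^ 2)
      ≤ (u - v) ^ 2 * (2 * t ^ 2 * (u ^ 2 * Real.exp (t * u ^ 2))
        + 2 * t ^ 2 * (v ^ 2 * Real.exp (t * v ^ 2))) := by
  refine (exp_trapezoid _ _).trans ?_
  -- Chebyshev's sum inequality: `u²` and `exp (t u²)` are similarly ordered.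
  have hch : 0 ≤ (u ^ 2 - v ^ 2) * (Real.exp (t * u ^ 2) - Real.exp (t * v ^ 2)) := by
    rcases le_total (v ^ 2) (u ^ 2) with h | h
    · exact mul_nonneg (sub_nonneg.2 h)
        (sub_nonneg.2 (Real.exp_le_exp.2 (mul_le_mul_of_nonneg_left h ht)))
    · exact mul_nonneg_of_nonpos_of_nonpos (sub_nonpos.2 h)
        (sub_nonpos.2 (Real.exp_le_exp.2 (mul_le_mul_of_nonneg_left h ht)))
  have hu := Real.exp_pos (t * u ^ 2)
  have hv := Real.exp_pos (t * v ^ 2)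
  generalize Real.exp (t * u ^ 2) = A at *
  generalize Real.exp (t * v ^ 2) = B at *
  have h1 : (u + v) ^ 2 * ((A + B) / 2) ≤ 2 * (u ^ 2 * A) + 2 * (v ^ 2 * B) := by
    nlinarith [mul_nonneg (sq_nonneg (u - v)) (add_pos hu hv).le]
  have h2 := mul_le_mul_of_nonneg_left h1 (mul_nonneg (sq_nonneg (u - v)) (sq_nonneg t))
  nlinarith

/-- A pointwise two-point inequality yields a modified logarithmic Sobolev inequality. -/
lemma ent_exp_le (w : Fin n → α → ℝ) (hw : ∀ i b, 0 ≤ w i b) (h1 : ∀ i, ∑ b, w i b = 1)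
    (g q P : (Fin n → α) → ℝ)
    (h : ∀ x y, (Real.exp (g x) - Real.exp (g y)) * (g x - g y) ≤ (q x - q y) ^ 2 * (P x + P y)) :
    Ex w (fun x => Real.exp (g x) * g x)
        - Ex w (fun x => Real.exp (g x)) * Real.log (Ex w fun x => Real.exp (g x))
      ≤ 2 * Ex w (fun x => gradSq w q x * P x) := by
  have ht := ent_tensor w hw h1 (fun x => Real.exp (g x)) (fun x => Real.exp_pos _)
  simp only [Real.log_exp] at ht
  refine ht.trans ?_
  have hi : ∀ i, Ex w (fun x => (1 / 2) * ∑ b, w i b *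
        ((Real.exp (g x) - Real.exp (g (Function.update x i b))) *
          (g x - g (Function.update x i b))))
      ≤ Ex w (fun x => ∑ b, w i b * ((q x - q (Function.update x i b)) ^ 2 * P x)) := by
    intro i
    have s1 : Ex w (fun x => (1 / 2) * ∑ b, w i b *
        ((Real.exp (g x) - Real.exp (g (Function.update x i b))) *
          (g x - g (Function.update x i b))))
        ≤ Ex w (fun x => (1 / 2) * (∑ b, w i b * ((q x - q (Function.update x i b)) ^ 2 * P x)
          + ∑ b, w i b * ((q x - q (Function.update x i b)) ^ 2 * P (Function.update x i b)))) := by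
      refine Ex_mono w hw fun x => ?_
      rw [← Finset.sum_add_distrib]
      refine mul_le_mul_of_nonneg_left (Finset.sum_le_sum fun b _ => ?_) (by norm_num)
      rw [← mul_add, ← mul_add]
      exact mul_le_mul_of_nonneg_left (h _ _) (hw i b)
    rw [Ex_const_mul, Ex_const_mul, Ex_add] at s1
    have s2 := Ex_swap w i (fun x y => (q x - q y) ^ 2 * P y)
    have s3 : Ex w (fun x => ∑ b, w i b * ((q (Function.update x i b) - q x) ^ 2 * P x))
        = Ex w (fun x => ∑ b, w i b * ((q x - q (Function.update x i b)) ^ 2 * P x)) := by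
      congr 1
      funext x
      exact Finset.sum_congr rfl fun b _ => by ring
    rw [s2, s3] at s1
    rw [Ex_const_mul]
    linarith
  refine (Finset.sum_le_sum fun i _ => hi i).trans (le_of_eq ?_)
  rw [← Ex_sum, ← Ex_const_mul]
  congr 1
  funext x
  unfold gradSq
  rw [Finset.sum_mul, Finset.mul_sum]
  refine Finset.sum_congr rfl fun i _ => ?_
  simp_rw [← mul_assoc]
  rw [← Finset.sum_mul]
  ring

/-- Herbst argument: the hypothesis says that `ψ(l)/l - R(l)` has nonpositive derivative, and its
limit at `0` is the derivative of `ψ` at `0` minus `R(0)`. -/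
lemma herbst_s2 (ψ ψ' R R' : ℝ → ℝ) (s : ℝ) (hs : 0 < s) (h0 : ψ 0 = 0)
    (hψ : ∀ l ∈ Set.Icc 0 s, HasDerivAt ψ (ψ' l) l)
    (hR : ∀ l ∈ Set.Icc 0 s, HasDerivAt R (R' l) l)
    (h : ∀ l ∈ Set.Ioo 0 s, l * ψ' l - ψ l ≤ l ^ 2 * R' l) :
    ψ s ≤ s * (ψ' 0 + R s - R 0) := by
  have hd : ∀ l ∈ Set.Ioc 0 s, HasDerivAt (fun l => ψ l / l - R l)
      ((ψ' l * l - ψ l * 1) / l ^ 2 - R' l) l := fun l hl =>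
    ((hψ l ⟨hl.1.le, hl.2⟩).div (hasDerivAt_id l) hl.1.ne').sub (hR l ⟨hl.1.le, hl.2⟩)
  have hanti : AntitoneOn (fun l => ψ l / l - R l) (Set.Ioc 0 s) := by
    refine antitoneOn_of_deriv_nonpos (convex_Ioc 0 s)
      (fun l hl => (hd l hl).continuousAt.continuousWithinAt)
      (fun l hl => ?_) (fun l hl => ?_)
    · rw [interior_Ioc] at hl
      exact (hd l ⟨hl.1, hl.2.le⟩).differentiableAt.differentiableWithinAt
    · rw [interior_Ioc] at hl
      rw [(hd l ⟨hl.1, hl.2.le⟩).deriv, sub_nonpos, div_le_iff₀ (by have := hl.1; positivity)]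
      linarith [h l hl]
  have hlim : Filter.Tendsto (fun l => ψ l / l - R l) (nhdsWithin 0 (Set.Ioi 0))
      (nhds (ψ' 0 - R 0)) := by
    refine Filter.Tendsto.sub ?_
      ((hR 0 ⟨le_rfl, hs.le⟩).continuousAt.tendsto.mono_left nhdsWithin_le_nhds)
    have := (hasDerivAt_iff_tendsto_slope.1 (hψ 0 ⟨le_rfl, hs.le⟩)).mono_left
      (nhdsWithin_mono 0 (fun x (hx : 0 < x) => (hx.ne' : x ≠ 0)))
    refine this.congr fun l => ?_
    simp [slope_def_field, h0]
  have hle : ψ s / s - R s ≤ ψ' 0 - R 0 := by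
    refine ge_of_tendsto hlim ?_
    filter_upwards [Ioc_mem_nhdsGT hs] with l hl
    exact hanti hl ⟨hs, le_rfl⟩ hl.2
  have : ψ s / s ≤ ψ' 0 + R s - R 0 := by linarith
  rw [div_le_iff₀ hs] at this
  linarith

lemma hasDerivAt_Ex_exp (w : Fin n → α → ℝ) (q : (Fin n → α) → ℝ) (t : ℝ) :
    HasDerivAt (fun t => Ex w fun x => Real.exp (t * q x))
      (Ex w fun x => Real.exp (t * q x) * q x) t := by
  unfold Ex
  refine HasDerivAt.fun_sum fun x _ => ?_
  have := (((hasDerivAt_id t).mul_const (q x)).exp).const_mul (wt w x)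
  simpa using this

lemma Ex_exp_zero (w : Fin n → α → ℝ) (h1 : ∀ i, ∑ b, w i b = 1) (q : (Fin n → α) → ℝ) :
    (Ex w fun x => Real.exp (0 * q x)) = 1 := by
  simp [Ex, sum_wt w h1]

lemma hasDerivAt_log_Ex_exp (w : Fin n → α → ℝ) (hw : ∀ i b, 0 ≤ w i b)
    (h1 : ∀ i, ∑ b, w i b = 1) (q : (Fin n → α) → ℝ) (t : ℝ) :
    HasDerivAt (fun t => Real.log (Ex w fun x => Real.exp (t * q x)))
      ((Ex w fun x => Real.exp (t * q x) * q x) / Ex w fun x => Real.exp (t * q x)) t :=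
  (hasDerivAt_Ex_exp w q t).log (Ex_pos w hw h1 fun _ => Real.exp_pos _).ne'

/-- If `|𝔡Γ| ≤ 1`, then `log E e^{sΓ²} ≤ s E Γ² / (1 - 4s)` for `s < 1/4`; this follows from
`Ent(e^{tΓ²}) ≤ 4t² E[Γ² e^{tΓ²}]`. -/
lemma log_Ex_exp_sq_le (w : Fin n → α → ℝ) (hw : ∀ i b, 0 ≤ w i b)
    (h1 : ∀ i, ∑ b, w i b = 1) (Γ : (Fin n → α) → ℝ) (hΓ : ∀ x, gradSq w Γ x ≤ 1)
    (s : ℝ) (hs : 0 < s) :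
    Real.log (Ex w fun x => Real.exp (s * Γ x ^ 2)) * (1 - 4 * s) ≤ s * Ex w fun x => Γ x ^ 2 := by
  set M : ℝ → ℝ := fun t => Ex w fun x => Real.exp (t * Γ x ^ 2) with hM
  set N : ℝ → ℝ := fun t => Ex w fun x => Real.exp (t * Γ x ^ 2) * Γ x ^ 2 with hN
  have hMpos : ∀ t, 0 < M t := fun t => Ex_pos w hw h1 fun x => Real.exp_pos _
  have hM0 : M 0 = 1 := Ex_exp_zero w h1 _
  have hK : ∀ t, HasDerivAt (fun t => Real.log (M t)) (N t / M t) t := fun t =>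
    hasDerivAt_log_Ex_exp w hw h1 (fun x => Γ x ^ 2) t
  have hψ : ∀ t, HasDerivAt (fun t => Real.log (M t) * (1 - 4 * t))
      (N t / M t * (1 - 4 * t) + Real.log (M t) * (-(4 * 1))) t := fun t =>
    (hK t).mul (((hasDerivAt_id t).const_mul 4).const_sub 1)
  have main := herbst_s2 (fun t => Real.log (M t) * (1 - 4 * t))
    (fun t => N t / M t * (1 - 4 * t) + Real.log (M t) * (-(4 * 1))) (fun _ => 0) (fun _ => 0) s hs
    (by simp [hM0]) (fun l _ => hψ l) (fun l _ => hasDerivAt_const l 0) (fun t ht => by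
      have hent := ent_exp_le w hw h1 (fun x => t * Γ x ^ 2) Γ
        (fun x => 2 * t ^ 2 * (Γ x ^ 2 * Real.exp (t * Γ x ^ 2)))
        (fun x y => exp_sq_trapezoid t (Γ x) (Γ y) ht.1.le)
      have hle : Ex w (fun x => gradSq w Γ x * (2 * t ^ 2 * (Γ x ^ 2 * Real.exp (t * Γ x ^ 2))))
          ≤ 2 * t ^ 2 * N t := by
        rw [hN, ← Ex_const_mul]
        refine Ex_mono w hw fun x => ?_
        have : 0 ≤ 2 * t ^ 2 * (Γ x ^ 2 * Real.exp (t * Γ x ^ 2)) := by positivity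
        nlinarith [hΓ x]
      have e : Ex w (fun x => Real.exp (t * Γ x ^ 2) * (t * Γ x ^ 2)) = t * N t := by
        rw [hN, ← Ex_const_mul]
        congr 1
        funext x
        ring
      rw [e] at hent
      change t * N t - M t * Real.log (M t) ≤ _ at hent
      have h2 : t * N t - M t * Real.log (M t) ≤ 4 * t ^ 2 * N t := by linarith
      have h3 : N t = N t / M t * M t := by field_simp [(hMpos t).ne']
      rw [h3] at h2
      generalize N t / M t = k at *
      have h4 : (t * k - Real.log (M t) - 4 * t ^ 2 * k) * M t ≤ 0 := by nlinarith
      have h5 : t * k - Real.log (M t) - 4 * t ^ 2 * k ≤ 0 := by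
        by_contra! hc
        nlinarith [mul_pos hc (hMpos t)]
      nlinarith)
  simp only [hM0] at main
  have hN0 : N 0 = Ex w fun x => Γ x ^ 2 := by simp [hN]
  rw [hN0] at main
  simpa using main

/-- The case `s = 1/3` of `log E e^{sf} ≤ B s² / (1 - 2s)` for a centered `f` with `Γ = |𝔡f|`,
`|𝔡Γ| ≤ 1` and `E Γ² ≤ B`. -/
lemma Ex_exp_third_le (w : Fin n → α → ℝ) (hw : ∀ i b, 0 ≤ w i b)
    (h1 : ∀ i, ∑ b, w i b = 1) (f Γ : (Fin n → α) → ℝ) (hf : Ex w f = 0)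
    (hfΓ : ∀ x, gradSq w f x = Γ x ^ 2) (hΓ : ∀ x, gradSq w Γ x ≤ 1)
    (B : ℝ) (hB : Ex w (fun x => Γ x ^ 2) ≤ B) :
    (Ex w fun x => Real.exp (1 / 3 * f x)) ≤ Real.exp (B / 3) := by
  set M : ℝ → ℝ := fun t => Ex w fun x => Real.exp (t * f x) with hM
  set N : ℝ → ℝ := fun t => Ex w fun x => Real.exp (t * f x) * f x with hN
  have hMpos : ∀ t, 0 < M t := fun t => Ex_pos w hw h1 fun x => Real.exp_pos _
  have hM0 : M 0 = 1 := Ex_exp_zero w h1 _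
  have hK : ∀ t, HasDerivAt (fun t => Real.log (M t)) (N t / M t) t := fun t =>
    hasDerivAt_log_Ex_exp w hw h1 f t
  have main := herbst_s2 (fun t => Real.log (M t)) (fun t => N t / M t)
    (fun t => B / 2 * (1 - 2 * t)⁻¹) (fun t => B / 2 * (-(-(2 * 1)) / (1 - 2 * t) ^ 2)) (1 / 3)
    (by norm_num) (by simp [hM0]) (fun l _ => hK l)
    (fun l hl => by
      refine HasDerivAt.const_mul (B / 2) (HasDerivAt.inv
        (((hasDerivAt_id l).const_mul 2).const_sub 1) ?_)
      have := hl.2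
      linarith)
    (fun t ht => by
      have ht0 := ht.1
      have ht1 : 0 < 1 - 2 * t := by have := ht.2; linarith
      have hent := ent_exp_le w hw h1 (fun x => t * f x) (fun x => t * f x)
        (fun x => Real.exp (t * f x) / 2)
        (fun x y => by
          have := exp_trapezoid (t * f x) (t * f y)
          rw [← add_div]
          exact this)
      have e1 : Ex w (fun x => gradSq w (fun x => t * f x) x * (Real.exp (t * f x) / 2))
          = t ^ 2 / 2 * Ex w (fun x => Real.exp (t * f x) * Γ x ^ 2) := by
        rw [← Ex_const_mul]
        congr 1
        funext x
        have : gradSq w (fun x => t * f x) x = t ^ 2 * gradSq w f x := by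
          unfold gradSq
          simp_rw [Finset.mul_sum]
          exact Finset.sum_congr rfl fun i _ => Finset.sum_congr rfl fun b _ => by ring
        rw [this, hfΓ]
        ring
      have e2 : Ex w (fun x => Real.exp (t * f x) * (t * f x)) = t * N t := by
        rw [hN, ← Ex_const_mul]
        congr 1
        funext x
        ring
      rw [e1, e2] at hent
      change t * N t - M t * Real.log (M t) ≤ _ at hent
      -- Gibbs variational principle with `H = (t / 2) Γ²`; the factor `t / 2` optimizes
      -- the resulting bound.
      have hvar := log_sum_le (wt w) (fun x => Real.exp (t * f x))
        (fun x => Real.exp (t / 2 * Γ x ^ 2)) (wt_nonneg w hw) (fun x => Real.exp_pos _)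
        (fun x => Real.exp_pos _) (sum_wt w h1)
      simp only [Real.log_exp] at hvar
      change M t * (Real.log (M t) - Real.log (Ex w fun x => Real.exp (t / 2 * Γ x ^ 2)))
        ≤ Ex w (fun x => Real.exp (t * f x) * (t * f x - t / 2 * Γ x ^ 2)) at hvar
      have e3 : Ex w (fun x => Real.exp (t * f x) * (t * f x - t / 2 * Γ x ^ 2))
          = t * N t - t / 2 * Ex w (fun x => Real.exp (t * f x) * Γ x ^ 2) := by
        rw [hN, ← Ex_const_mul, ← Ex_const_mul, ← Ex_sub]
        congr 1
        funext x
        ring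
      rw [e3] at hvar
      have hK2 := log_Ex_exp_sq_le w hw h1 Γ hΓ (t / 2) (by linarith)
      set K := Real.log (Ex w fun x => Real.exp (t / 2 * Γ x ^ 2)) with hKdef
      set Q := Ex w (fun x => Real.exp (t * f x) * Γ x ^ 2) with hQ
      have hK3 : K * (1 - 2 * t) ≤ t / 2 * B := by
        nlinarith
      have h3 : N t = N t / M t * M t := by field_simp [(hMpos t).ne']
      rw [h3] at hent hvar
      have hMt := hMpos t
      generalize N t / M t = k at *
      generalize Real.log (M t) = L at *
      generalize M t = m at *
      have a1 : (t * k - L) * m * (1 - 2 * t) ≤ 2 * t * (m * K) := by nlinarith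
      have a2 : (t * k - L) * (1 - 2 * t) ≤ 2 * t * K := by
        by_contra! hc
        nlinarith [mul_lt_mul_of_pos_left hc hMt]
      have a3 : (t * k - L) * (1 - 2 * t) ^ 2 ≤ t ^ 2 * B := by
        nlinarith [mul_le_mul_of_nonneg_right a2 ht1.le, mul_le_mul_of_nonneg_left hK3 ht0.le]
      have a4 : t ^ 2 * (B / 2 * (-(-(2 * 1)) / (1 - 2 * t) ^ 2)) = t ^ 2 * B / (1 - 2 * t) ^ 2 := by
        field_simp
      rw [a4, le_div_iff₀ (by positivity)]
      exact a3)
  have hN0 : N 0 = 0 := by simp [hN, hf]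
  simp only [hM0, hN0] at main
  rw [← Real.log_le_iff_le_exp (hMpos (1 / 3))]
  norm_num at main ⊢
  linarith

end Concentration

/-! ### Hoeffding decomposition on the cube -/

section Hoeffding

variable {n : ℕ} {α : Type*} [Fintype α]

/-- The discrete form of `𝔇ᵢ`. -/
noncomputable def Dc (w : Fin n → α → ℝ) (i : Fin n) (g : (Fin n → α) → ℝ)
    (x : Fin n → α) : ℝ :=
  g x - Av w i g x

lemma Av_sum {κ : Type*} (s : Finset κ) (w : Fin n → α → ℝ) (i : Fin n)
    (F : κ → (Fin n → α) → ℝ) (x : Fin n → α) :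
    Av w i (fun x => ∑ k ∈ s, F k x) x = ∑ k ∈ s, Av w i (F k) x := by
  unfold Av
  rw [Finset.sum_comm]
  exact Finset.sum_congr rfl fun b _ => by rw [Finset.mul_sum]

variable (w : Fin n → α → ℝ) (h1 : ∀ i, ∑ b, w i b = 1)
  (k : Finset (Fin n) → (Fin n → α) → ℝ)
  (hloc : ∀ S, ∀ i ∉ S, ∀ x b, k S (Function.update x i b) = k S x)
  (hdeg : ∀ S, ∀ i ∈ S, ∀ x, Av w i (k S) x = 0)

include h1 hloc hdeg

/-- `𝔇ᵢ` keeps exactly the Hoeffding terms that involve the coordinate `i`. -/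
lemma Dc_sum (s : Finset (Finset (Fin n))) (i : Fin n) :
    Dc w i (fun x => ∑ S ∈ s, k S x) = fun x => ∑ S ∈ s with i ∈ S, k S x := by
  funext x
  unfold Dc
  rw [Av_sum, ← Finset.sum_sub_distrib, Finset.sum_filter]
  refine Finset.sum_congr rfl fun S _ => ?_
  split_ifs with hi
  · rw [hdeg S i hi, sub_zero]
  · have : Av w i (k S) x = k S x := by
      unfold Av
      simp_rw [hloc S i hi x]
      rw [← Finset.sum_mul, h1, one_mul]
    rw [this, sub_self]

/-- Integrating out a coordinate of `S` that is not in `T` shows `k S ⊥ k T`. -/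
lemma Ex_mul_eq_zero_aux (S T : Finset (Fin n)) (i : Fin n) (hS : i ∈ S) (hT : i ∉ T) :
    Ex w (fun x => k S x * k T x) = 0 := by
  rw [← Ex_Av w h1 i]
  have : Av w i (fun x => k S x * k T x) = fun _ => 0 := by
    funext x
    have h := hdeg S i hS x
    unfold Av at h ⊢
    simp_rw [hloc T i hT x, ← mul_assoc]
    rw [← Finset.sum_mul, h, zero_mul]
  rw [this]
  simp [Ex]

lemma Ex_mul_eq_zero (S T : Finset (Fin n)) (hST : S ≠ T) :
    Ex w (fun x => k S x * k T x) = 0 := by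
  by_cases h : S ⊆ T
  · have : ¬ T ⊆ S := fun h' => hST (h.antisymm h')
    obtain ⟨i, hi, hi'⟩ := Finset.not_subset.1 this
    simp_rw [mul_comm (k S _)]
    exact Ex_mul_eq_zero_aux w h1 k hloc hdeg T S i hi hi'
  · obtain ⟨i, hi, hi'⟩ := Finset.not_subset.1 h
    exact Ex_mul_eq_zero_aux w h1 k hloc hdeg S T i hi hi'

lemma Ex_sum_mul_sum (s t : Finset (Finset (Fin n))) (hts : t ⊆ s) :
    Ex w (fun x => (∑ S ∈ s, k S x) * ∑ T ∈ t, k T x) = ∑ T ∈ t, Ex w (fun x => k T x ^ 2) := by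
  simp_rw [Finset.mul_sum]
  rw [Ex_sum]
  refine Finset.sum_congr rfl fun T hT => ?_
  simp_rw [Finset.sum_mul]
  rw [Ex_sum, Finset.sum_eq_single T]
  · simp_rw [sq]
  · intro S _ hST
    exact Ex_mul_eq_zero w h1 k hloc hdeg S T hST
  · intro h
    exact absurd (hts hT) h

/-- The Poincaré-type comparison `E|𝔡g|² ≤ E‖𝔇⁽²⁾g‖²` for `g` without Hoeffding terms of order
at most one: a term of order `d` has weight `d` on the left and `d (d - 1)` on the right. -/
lemma Ex_gradSq_le (hw : ∀ i b, 0 ≤ w i b) (hlow : ∀ S : Finset (Fin n), S.card ≤ 1 → k S = 0)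
    (g : (Fin n → α) → ℝ) (hg : g = fun x => ∑ S, k S x) :
    Ex w (gradSq w g) ≤
      Ex w (fun x => ∑ i, ∑ j, if i = j then 0 else Dc w i (Dc w j g) x ^ 2) := by
  have hvar : ∀ i, Ex w (fun x => (1 / 2) * ∑ b, w i b * (g x - g (Function.update x i b)) ^ 2)
      = Ex w (fun x => g x * Dc w i g x) := by
    intro i
    have e : (fun x => (1 / 2) * ∑ b, w i b * (g x - g (Function.update x i b)) ^ 2)
        = fun x => (1 / 2) * ((g x ^ 2 + Av w i (fun y => g y ^ 2) x) - 2 * (g x * Av w i g x)) := by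
      funext x
      congr 1
      unfold Av
      rw [Finset.mul_sum, Finset.mul_sum,
        show g x ^ 2 = ∑ b, w i b * g x ^ 2 by rw [← Finset.sum_mul, h1, one_mul],
        ← Finset.sum_add_distrib, ← Finset.sum_sub_distrib]
      refine Finset.sum_congr rfl fun b _ => by ring
    rw [e, Ex_const_mul, Ex_sub, Ex_add, Ex_const_mul]
    have e2 : (Ex w fun x => Av w i (fun y => g y ^ 2) x) = Ex w (fun x => g x ^ 2) :=
      Ex_Av w h1 i _
    have e3 : (fun x => g x * Dc w i g x) = fun x => g x ^ 2 - g x * Av w i g x := by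
      funext x
      unfold Dc
      ring
    rw [e2, e3, Ex_sub]
    ring
  have hL : Ex w (gradSq w g) = ∑ i, ∑ S with i ∈ S, Ex w (fun x => k S x ^ 2) := by
    unfold gradSq
    rw [Ex_sum]
    refine Finset.sum_congr rfl fun i _ => ?_
    rw [hvar, hg, Dc_sum w h1 k hloc hdeg]
    exact Ex_sum_mul_sum w h1 k hloc hdeg _ _ (Finset.subset_univ _)
  rw [hL, Ex_sum]
  refine Finset.sum_le_sum fun i _ => ?_
  rw [Ex_sum]
  have hR : ∀ j, Ex w (fun x => if i = j then 0 else Dc w i (Dc w j g) x ^ 2)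
      = ∑ S with i ∈ S, if j ∈ S.erase i then Ex w (fun x => k S x ^ 2) else 0 := by
    intro j
    by_cases hij : i = j
    · subst hij
      simp [Ex]
    · simp only [hij, if_false]
      rw [hg, Dc_sum w h1 k hloc hdeg, Dc_sum w h1 k hloc hdeg]
      simp_rw [sq]
      rw [Ex_sum_mul_sum w h1 k hloc hdeg _ _ subset_rfl, ← Finset.sum_filter,
        Finset.filter_filter, Finset.filter_filter]
      refine Finset.sum_congr ?_ fun S _ => by simp_rw [sq]
      ext S
      have : j ≠ i := fun h => hij h.symm
      simp [this, and_comm]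
  simp_rw [hR]
  rw [Finset.sum_comm]
  refine Finset.sum_le_sum fun S hS => ?_
  rw [Finset.mem_filter] at hS
  rw [← Finset.sum_filter]
  by_cases hc : S.card ≤ 1
  · simp [hlow S hc, Ex]
  · have hN : 0 ≤ Ex w (fun x => k S x ^ 2) :=
      Finset.sum_nonneg fun x _ => mul_nonneg (wt_nonneg w hw x) (sq_nonneg _)
    have hcard : 1 ≤ ((Finset.univ.filter fun j => j ∈ S.erase i).card : ℝ) := by
      have e : (Finset.univ.filter fun j => j ∈ S.erase i) = S.erase i := by ext; simp
      rw [e, Finset.card_erase_of_mem hS.2]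
      exact_mod_cast (by omega : 1 ≤ S.card - 1)
    rw [Finset.sum_const, nsmul_eq_mul]
    nlinarith

omit hloc in
lemma Ex_eq_zero (hlow : ∀ S : Finset (Fin n), S.card ≤ 1 → k S = 0) :
    Ex w (fun x => ∑ S, k S x) = 0 := by
  rw [Ex_sum]
  refine Finset.sum_eq_zero fun S _ => ?_
  rcases S.eq_empty_or_nonempty with h | ⟨i, hi⟩
  · rw [hlow S (by simp [h])]
    simp [Ex]
  · rw [← Ex_Av w h1 i, show Av w i (k S) = fun _ => 0 from funext (hdeg S i hi)]
    simp [Ex]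

end Hoeffding

/-! ### Reduction of product measures to the discrete cube -/

section Transfer

/-- The weights of a two-point measure, `true` carrying the mass `p i`. -/
noncomputable def bw {n : ℕ} (p : Fin n → ℝ) (i : Fin n) (b : Bool) : ℝ :=
  cond b (p i) (1 - p i)

/-- The point of `ℝⁿ` encoded by a vertex of the discrete cube. -/
def pt {n : ℕ} (a c : Fin n → ℝ) (x : Fin n → Bool) (i : Fin n) : ℝ :=
  cond (x i) (a i) (c i)

lemma pt_update {n : ℕ} (a c : Fin n → ℝ) (x : Fin n → Bool) (i : Fin n) (b : Bool) :
    pt a c (Function.update x i b) = Function.update (pt a c x) i (cond b (a i) (c i)) := by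
  funext j
  by_cases h : j = i
  · subst h
    simp [pt]
  · simp [pt, h]

variable {n : ℕ} (μ : Fin n → Measure ℝ) [∀ i, IsProbabilityMeasure (μ i)]
  (a c p : Fin n → ℝ) (hp : ∀ i, p i ∈ Set.Ioo (0 : ℝ) 1)
  (hμ : ∀ i, μ i = ENNReal.ofReal (p i) • Measure.dirac (a i)
      + ENNReal.ofReal (1 - p i) • Measure.dirac (c i))

lemma bw_nonneg (hp : ∀ i, p i ∈ Set.Ioo (0 : ℝ) 1) (i : Fin n) (b : Bool) : 0 ≤ bw p i b := by
  cases b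
  · simpa [bw] using (hp i).2.le
  · simpa [bw] using (hp i).1.le

lemma sum_bw (i : Fin n) : ∑ b, bw p i b = 1 := by
  simp [bw]

include hp hμ

omit [∀ i, IsProbabilityMeasure (μ i)] in
lemma integral_coord (i : Fin n) (φ : ℝ → ℝ) :
    ∫ y, φ y ∂(μ i) = ∑ b, bw p i b * φ (cond b (a i) (c i)) := by
  have hint : ∀ (r : ℝ) (z : ℝ), Integrable φ (ENNReal.ofReal r • Measure.dirac z) := fun r z =>
    (integrable_dirac (by simp)).smul_measure ENNReal.ofReal_ne_top
  rw [hμ i, integral_add_measure (hint _ _) (hint _ _), integral_smul_measure,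
    integral_smul_measure, integral_dirac, integral_dirac,
    ENNReal.toReal_ofReal (hp i).1.le, ENNReal.toReal_ofReal (by linarith [(hp i).2])]
  simp [bw]

lemma pi_eq_sum_dirac :
    Measure.pi μ = ∑ x : Fin n → Bool, ENNReal.ofReal (wt (bw p) x) • Measure.dirac (pt a c x) := by
  refine Measure.pi_eq fun s hs => ?_
  have hi : ∀ i, μ i (s i) = ∑ b, ENNReal.ofReal (bw p i b) *
      (s i).indicator 1 (cond b (a i) (c i)) := by
    intro i
    rw [hμ i]
    simp [bw, hs i]
  simp_rw [hi]
  rw [Finset.prod_univ_sum, Measure.finsetSum_apply, Fintype.piFinset_univ]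
  refine Finset.sum_congr rfl fun x _ => ?_
  rw [Measure.smul_apply, Measure.dirac_apply' _ (MeasurableSet.univ_pi hs), smul_eq_mul,
    Finset.prod_mul_distrib, wt,
    ENNReal.ofReal_prod_of_nonneg (fun i _ => bw_nonneg p hp i _)]
  congr 1
  by_cases hx : pt a c x ∈ Set.univ.pi s
  · rw [Set.indicator_of_mem hx]
    symm
    exact Finset.prod_eq_one fun i _ => Set.indicator_of_mem (hx i trivial) _
  · rw [Set.indicator_of_notMem hx]
    symm
    simp only [Set.mem_pi, Set.mem_univ, true_imp_iff, not_forall] at hx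
    obtain ⟨i, hi⟩ := hx
    exact Finset.prod_eq_zero (Finset.mem_univ i) (Set.indicator_of_notMem hi _)

lemma integral_pi (φ : (Fin n → ℝ) → ℝ) :
    ∫ x, φ x ∂(Measure.pi μ) = Ex (bw p) (fun x => φ (pt a c x)) := by
  rw [pi_eq_sum_dirac μ a c p hp hμ, integral_finsetSum_measure fun x _ =>
    (integrable_dirac (by simp)).smul_measure ENNReal.ofReal_ne_top]
  unfold Ex
  refine Finset.sum_congr rfl fun x _ => ?_
  rw [integral_smul_measure, integral_dirac,
    ENNReal.toReal_ofReal (wt_nonneg _ (bw_nonneg p hp) x), smul_eq_mul]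

omit [∀ i, IsProbabilityMeasure (μ i)]

lemma DD_pt (f : (Fin n → ℝ) → ℝ) (i : Fin n) (x : Fin n → Bool) :
    DD μ f i (pt a c x) = Dc (bw p) i (fun x => f (pt a c x)) x := by
  unfold DD Dc Av
  rw [integral_coord μ a c p hp hμ i (fun y => f (Function.update (pt a c x) i y))]
  simp_rw [pt_update]

lemma ddNorm_sq_pt (f : (Fin n → ℝ) → ℝ) (x : Fin n → Bool) :
    ddNorm μ f (pt a c x) ^ 2 = gradSq (bw p) (fun x => f (pt a c x)) x := by
  unfold ddNorm gradSq
  rw [Real.sq_sqrt (Finset.sum_nonneg fun i _ => sq_nonneg _)]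
  refine Finset.sum_congr rfl fun i _ => ?_
  unfold dd
  rw [Real.sq_sqrt (mul_nonneg (by norm_num) (integral_nonneg fun y => sq_nonneg _)),
    integral_coord μ a c p hp hμ i
      (fun y => (f (pt a c x) - f (Function.update (pt a c x) i y)) ^ 2)]
  simp_rw [pt_update]

end Transfer

/-! ### Conclusion -/

/-- Jensen's inequality turns the bound on `E e^{F/3}` into one for the smaller exponent. -/
lemma Ex_exp_rescale {n : ℕ} {α : Type*} [Fintype α] (w : Fin n → α → ℝ)
    (hw : ∀ i b, 0 ≤ w i b) (h1 : ∀ i, ∑ b, w i b = 1) (F : (Fin n → α) → ℝ) (B : ℝ) (hB : 0 ≤ B)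
    (h : (Ex w fun x => Real.exp (1 / 3 * F x)) ≤ 2 * Real.exp (B / 3)) :
    (Ex w fun x => Real.exp (F x / (3 + 2 * B))) ≤ 2 := by
  set θ : ℝ := 3 / (3 + 2 * B) with hθ
  have hpos : 0 < 3 + 2 * B := by linarith
  have hθ0 : 0 ≤ θ := by positivity
  have hθ1 : θ ≤ 1 := by rw [hθ, div_le_one hpos]; linarith
  have hj := (Real.concaveOn_rpow hθ0 hθ1).le_map_sum (t := Finset.univ) (w := wt w)
    (p := fun x => Real.exp (1 / 3 * F x)) (fun x _ => wt_nonneg w hw x) (sum_wt w h1)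
    (fun x _ => (Real.exp_pos _).le)
  have e : ∀ x, Real.exp (1 / 3 * F x) ^ θ = Real.exp (F x / (3 + 2 * B)) := by
    intro x
    rw [← Real.exp_mul, hθ]
    congr 1
    field_simp
  simp only [e, smul_eq_mul] at hj
  change (Ex w fun x => Real.exp (F x / (3 + 2 * B))) ≤
    (Ex w fun x => Real.exp (1 / 3 * F x)) ^ θ at hj
  refine hj.trans ((Real.rpow_le_rpow (Ex_pos w hw h1 fun x => Real.exp_pos _).le h hθ0).trans ?_)
  have e2 : 2 * Real.exp (B / 3) = Real.exp (Real.log 2 + B / 3) := by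
    rw [Real.exp_add, Real.exp_log two_pos]
  rw [e2, ← Real.exp_mul, ← Real.le_log_iff_exp_le two_pos, hθ, mul_div_assoc',
    div_le_iff₀ hpos]
  -- This reduces to `B ≤ 2 B log 2`.
  nlinarith [Real.log_two_gt_d9]

/-- Second order concentration for products of two-point (Bernoulli) measures
`μᵢ = pᵢ δ_{aᵢ} + (1−pᵢ) δ_{bᵢ}`: under the hypotheses of Theorem 1.2 one has
`∫ exp(|f|/(3+2b²)) dμ ≤ 2`. -/
theorem second_order_concentration_bernoulli
    {n : ℕ} (μ : Fin n → Measure ℝ) [∀ i, IsProbabilityMeasure (μ i)]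
    (a c p : Fin n → ℝ) (hp : ∀ i, p i ∈ Set.Ioo (0 : ℝ) 1)
    (hμ : ∀ i, μ i = ENNReal.ofReal (p i) • Measure.dirac (a i)
      + ENNReal.ofReal (1 - p i) • Measure.dirac (c i))
    (f : (Fin n → ℝ) → ℝ) (hmeas : Measurable f) (hbdd : ∃ C, ∀ x, |f x| ≤ C)
    (h : Finset (Fin n) → (Fin n → ℝ) → ℝ) (hker : IsHoeffdingKernels μ h)
    (hsum : ∀ x, f x = ∑ S : Finset (Fin n), h S x)
    (hlow : ∀ S : Finset (Fin n), S.card ≤ 1 → h S = 0)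
    (hgrad : ∀ x, ddNorm μ (fun y => ddNorm μ f y) x ≤ 1)
    (b : ℝ) (hb : 0 ≤ b)
    (hHS : ∫ x, D2HSsq μ f x ∂(Measure.pi μ) ≤ b ^ 2) :
    ∫ x, Real.exp (|f x| / (3 + 2 * b ^ 2)) ∂(Measure.pi μ) ≤ 2 := by
  have hw := bw_nonneg p hp
  have h1 := sum_bw p
  set w := bw p with hwdef
  set g : (Fin n → Bool) → ℝ := fun x => f (pt a c x) with hg
  set Γ : (Fin n → Bool) → ℝ := fun x => ddNorm μ f (pt a c x) with hΓ
  set k : Finset (Fin n) → (Fin n → Bool) → ℝ := fun S x => h S (pt a c x) with hk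
  have hgk : g = fun x => ∑ S, k S x := funext fun x => hsum (pt a c x)
  have hloc : ∀ S, ∀ i ∉ S, ∀ x b, k S (Function.update x i b) = k S x := by
    intro S i hi x b
    refine hker.localized S _ _ fun j hj => ?_
    have : j ≠ i := fun h => hi (h ▸ hj)
    simp [pt, this]
  have hdeg : ∀ S, ∀ i ∈ S, ∀ x, Av w i (k S) x = 0 := by
    intro S i hi x
    have := hker.degenerate S i hi (pt a c x)
    rw [integral_coord μ a c p hp hμ i (fun y => h S (Function.update (pt a c x) i y))] at this
    simp_rw [← pt_update] at this
    exact this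
  have hlow' : ∀ S : Finset (Fin n), S.card ≤ 1 → k S = 0 := fun S hS => by
    funext x
    simp [hk, hlow S hS]
  have hg0 : Ex w g = 0 := by
    rw [hgk]
    exact Ex_eq_zero w h1 k hdeg hlow'
  have hgΓ : ∀ x, gradSq w g x = Γ x ^ 2 := fun x => (ddNorm_sq_pt μ a c p hp hμ f x).symm
  have hΓ1 : ∀ x, gradSq w Γ x ≤ 1 := fun x => by
    rw [← ddNorm_sq_pt μ a c p hp hμ (fun y => ddNorm μ f y) x]
    exact pow_le_one₀ (Real.sqrt_nonneg _) (hgrad _)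
  have hB : Ex w (fun x => Γ x ^ 2) ≤ b ^ 2 := by
    rw [integral_pi μ a c p hp hμ] at hHS
    refine le_trans ?_ hHS
    have e := Ex_gradSq_le w h1 k hloc hdeg hw hlow' g hgk
    rw [show gradSq w g = fun x => Γ x ^ 2 from funext hgΓ] at e
    refine e.trans (le_of_eq ?_)
    congr 1
    funext x
    unfold D2HSsq
    refine Finset.sum_congr rfl fun i _ => Finset.sum_congr rfl fun j _ => ?_
    rw [DD_pt μ a c p hp hμ (DD μ f j) i x,
      show (fun x => DD μ f j (pt a c x)) = Dc w j g from
        funext fun x => DD_pt μ a c p hp hμ f j x]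
  have hpos := Ex_exp_third_le w hw h1 g Γ hg0 hgΓ hΓ1 (b ^ 2) hB
  have hneg := Ex_exp_third_le w hw h1 (fun x => -g x) Γ
    (by
      have := Ex_const_mul w (-1) g
      simp only [neg_mul, one_mul] at this
      rw [this, hg0, neg_zero])
    (fun x => by
      rw [← hgΓ]
      unfold gradSq
      refine Finset.sum_congr rfl fun i _ => ?_
      congr 1
      exact Finset.sum_congr rfl fun b _ => by ring)
    hΓ1 (b ^ 2) hB
  rw [integral_pi μ a c p hp hμ]
  refine Ex_exp_rescale w hw h1 (fun x => |g x|) (b ^ 2) (sq_nonneg b) ?_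
  have habs : (Ex w fun x => Real.exp (1 / 3 * |g x|))
      ≤ Ex w fun x => Real.exp (1 / 3 * g x) + Real.exp (1 / 3 * -g x) := by
    refine Ex_mono w hw fun x => ?_
    rcases abs_choice (g x) with h | h <;> rw [h]
    · linarith [Real.exp_pos (1 / 3 * -g x)]
    · linarith [Real.exp_pos (1 / 3 * g x)]
  rw [Ex_add] at habs
  linarith
end
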